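/- arXiv:2005.05111 — 2 statements merged into one kernel-verified Lean document; each statement's English description precedes it below -/
import Mathlib

section
/- (Theorem 2.) When privacy is required only against Bob, who computes a function based on a single transmission from Alice: the triple (p_XY, f, g) is asymptotically securely computable with no interaction if and only if it is perfectly securely computable. -/
open scoped BigOperators

/-- A probability mass function on a finite type, given as a real-valued function. -/
def IsPMF {Ω : Type*} [Fintype Ω] (p : Ω → ℝ) : Prop :=
  (∀ ω, 0 ≤ p ω) ∧ ∑ ω, p ω = 1

open Classical in
/-- Probability of an event under a pmf on a finite type. -/
noncomputable def probOf {Ω : Type*} [Fintype Ω] (p : Ω → ℝ) (E : Ω → Prop) : ℝ :=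
  ∑ ω, if E ω then p ω else 0

/-- Distribution (pushforward) of a random variable `A` under pmf `p`. -/
noncomputable def distOf {Ω β : Type*} [Fintype Ω] [DecidableEq β]
    (p : Ω → ℝ) (A : Ω → β) : β → ℝ :=
  fun b => ∑ ω, if A ω = b then p ω else 0

/-- Shannon entropy (in nats) of a distribution on a finite type. -/
noncomputable def entD {β : Type*} [Fintype β] (q : β → ℝ) : ℝ :=
  -∑ b, q b * Real.log (q b)

/-- Shannon entropy H(A) of a random variable `A` under pmf `p`. -/
noncomputable def entRV {Ω β : Type*} [Fintype Ω] [Fintype β] [DecidableEq β]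
    (p : Ω → ℝ) (A : Ω → β) : ℝ :=
  entD (distOf p A)

/-- Conditional Shannon entropy H(A | C). -/
noncomputable def condEnt {Ω β γ : Type*} [Fintype Ω] [Fintype β] [DecidableEq β]
    [Fintype γ] [DecidableEq γ] (p : Ω → ℝ) (A : Ω → β) (C : Ω → γ) : ℝ :=
  entRV p (fun ω => (A ω, C ω)) - entRV p C

/-- Mutual information I(A; B). -/
noncomputable def mutInfo {Ω β γ : Type*} [Fintype Ω] [Fintype β] [DecidableEq β]
    [Fintype γ] [DecidableEq γ] (p : Ω → ℝ) (A : Ω → β) (B : Ω → γ) : ℝ :=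
  entRV p A + entRV p B - entRV p (fun ω => (A ω, B ω))

/-- Conditional mutual information I(A; B | C). -/
noncomputable def condMutInfo {Ω β γ δ : Type*} [Fintype Ω] [Fintype β] [DecidableEq β]
    [Fintype γ] [DecidableEq γ] [Fintype δ] [DecidableEq δ]
    (p : Ω → ℝ) (A : Ω → β) (B : Ω → γ) (C : Ω → δ) : ℝ :=
  entRV p (fun ω => (A ω, C ω)) + entRV p (fun ω => (B ω, C ω))
    - entRV p (fun ω => (A ω, B ω, C ω)) - entRV p C

/-- Privacy against Alice with respect to `g` of a transition kernel `k(m|x,y)`,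
for the function `f` being computed. -/
def PrivAlice {𝒳 𝒴 𝒵 𝒢 ℳ : Type*} (f : 𝒳 → 𝒴 → 𝒵) (g : 𝒳 → 𝒴 → 𝒢)
    (k : 𝒳 → 𝒴 → ℳ → ℝ) : Prop :=
  ∀ x y₁ y₂, g x y₁ ≠ g x y₂ → f x y₁ = f x y₂ → ∀ m, k x y₁ m = k x y₂ m

/-- Privacy against Bob with respect to `h` of a transition kernel `k(m|x,y)`,
for the function `f` being computed. -/
def PrivBob {𝒳 𝒴 𝒵 ℋ ℳ : Type*} (f : 𝒳 → 𝒴 → 𝒵) (h : 𝒳 → 𝒴 → ℋ)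
    (k : 𝒳 → 𝒴 → ℳ → ℝ) : Prop :=
  ∀ x₁ x₂ y, h x₁ y ≠ h x₂ y → f x₁ y = f x₂ y → ∀ m, k x₁ y m = k x₂ y m

/-- Joint law of `(XYⁿ, M, Zⁿ)` induced by `n` i.i.d. copies of `pXY`, Alice's single
transmission kernel `a(m|xⁿ)` and Bob's output kernel `b(zⁿ|m,yⁿ)`. -/
noncomputable def jointNI {𝒳 𝒴 𝒵 : Type} (pXY : 𝒳 × 𝒴 → ℝ) (n mM : ℕ)
    (a : (Fin n → 𝒳) → Fin mM → ℝ)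
    (b : Fin mM → (Fin n → 𝒴) → (Fin n → 𝒵) → ℝ) :
    (Fin n → 𝒳 × 𝒴) × Fin mM × (Fin n → 𝒵) → ℝ :=
  fun ω => (∏ i, pXY (ω.1 i)) * a (fun i => (ω.1 i).1) ω.2.1 *
    b ω.2.1 (fun i => (ω.1 i).2) ω.2.2

/-- The triple `(pXY, f, g)` is asymptotically securely computable with no interaction:
for every `ε > 0` there are a blocklength `n`, a message alphabet `Fin mM`, a transmission
kernel for Alice and an output kernel for Bob such that `P(Zⁿ ≠ Fⁿ) ≤ ε` and
`I(M; Gⁿ | Zⁿ, Yⁿ) ≤ n ε`. -/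
def AsympSecurelyComputableNI {𝒳 𝒴 𝒵 𝒢 : Type}
    [Fintype 𝒳] [DecidableEq 𝒳] [Fintype 𝒴] [DecidableEq 𝒴]
    [Fintype 𝒵] [DecidableEq 𝒵] [Fintype 𝒢] [DecidableEq 𝒢]
    (pXY : 𝒳 × 𝒴 → ℝ) (f : 𝒳 → 𝒴 → 𝒵) (g : 𝒳 → 𝒴 → 𝒢) : Prop :=
  ∀ ε : ℝ, 0 < ε → ∃ (n mM : ℕ), 0 < n ∧
    ∃ (a : (Fin n → 𝒳) → Fin mM → ℝ) (b : Fin mM → (Fin n → 𝒴) → (Fin n → 𝒵) → ℝ),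
      (∀ xv, (∀ m, 0 ≤ a xv m) ∧ ∑ m, a xv m = 1) ∧
      (∀ m yv, (∀ z, 0 ≤ b m yv z) ∧ ∑ z, b m yv z = 1) ∧
      probOf (jointNI pXY n mM a b)
        (fun ω => ω.2.2 ≠ fun i => f (ω.1 i).1 (ω.1 i).2) ≤ ε ∧
      condMutInfo (jointNI pXY n mM a b)
        (fun ω => ω.2.1)
        (fun ω => fun i => g (ω.1 i).1 (ω.1 i).2)
        (fun ω => (ω.2.2, fun i => (ω.1 i).2)) ≤ n * ε

/-- The triple `(pXY, f, g)` is perfectly securely computable: there is a finite `U` and a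
conditional distribution `p(u|x,y)` such that `U − X − Y` is a Markov chain
(`I(U; Y | X) = 0`), `H(F | U, Y) = 0` and `I(U; G | F, Y) = 0`. -/
def PerfectlySecurelyComputableNI {𝒳 𝒴 𝒵 𝒢 : Type}
    [Fintype 𝒳] [DecidableEq 𝒳] [Fintype 𝒴] [DecidableEq 𝒴]
    [Fintype 𝒵] [DecidableEq 𝒵] [Fintype 𝒢] [DecidableEq 𝒢]
    (pXY : 𝒳 × 𝒴 → ℝ) (f : 𝒳 → 𝒴 → 𝒵) (g : 𝒳 → 𝒴 → 𝒢) : Prop :=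
  ∃ (u : ℕ) (pU : 𝒳 → 𝒴 → Fin u → ℝ),
    (∀ x y, (∀ v, 0 ≤ pU x y v) ∧ ∑ v, pU x y v = 1) ∧
    condMutInfo (fun ω : (𝒳 × 𝒴) × Fin u => pXY ω.1 * pU ω.1.1 ω.1.2 ω.2)
      (fun ω => ω.2) (fun ω => ω.1.2) (fun ω => ω.1.1) = 0 ∧
    condEnt (fun ω : (𝒳 × 𝒴) × Fin u => pXY ω.1 * pU ω.1.1 ω.1.2 ω.2)
      (fun ω => f ω.1.1 ω.1.2) (fun ω => (ω.2, ω.1.2)) = 0 ∧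
    condMutInfo (fun ω : (𝒳 × 𝒴) × Fin u => pXY ω.1 * pU ω.1.1 ω.1.2 ω.2)
      (fun ω => ω.2) (fun ω => g ω.1.1 ω.1.2) (fun ω => (f ω.1.1 ω.1.2, ω.1.2)) = 0

namespace NI
variable {Ω Ω' α β γ δ : Type*} [Fintype Ω] [Fintype Ω']
  [Fintype α] [DecidableEq α] [Fintype β] [DecidableEq β] [Fintype γ] [DecidableEq γ]
  [Fintype δ] [DecidableEq δ]

lemma sum_distOf (p : Ω → ℝ) (A : Ω → β) (h : β → ℝ) :
    ∑ b, distOf p A b * h b = ∑ ω, p ω * h (A ω) := by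
  unfold distOf
  simp_rw [Finset.sum_mul]
  rw [Finset.sum_comm]
  refine Finset.sum_congr rfl fun ω _ => ?_
  simp [ite_mul]

lemma ent_eq (p : Ω → ℝ) (A : Ω → β) :
    entRV p A = -∑ ω, p ω * Real.log (distOf p A (A ω)) := by
  unfold entRV entD
  rw [sum_distOf p A (fun b => Real.log (distOf p A b))]

lemma dist_nonneg {p : Ω → ℝ} (hp : ∀ ω, 0 ≤ p ω) (A : Ω → β) (b : β) : 0 ≤ distOf p A b := by
  unfold distOf
  exact Finset.sum_nonneg fun ω _ => by split_ifs <;> simp [hp]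

lemma dist_pos {p : Ω → ℝ} (hp : ∀ ω, 0 ≤ p ω) (A : Ω → β) {ω : Ω} (h : 0 < p ω) :
    0 < distOf p A (A ω) := by
  unfold distOf
  refine Finset.sum_pos' (fun ω' _ => by split_ifs <;> simp [hp]) ⟨ω, Finset.mem_univ _, by simpa⟩

lemma dist_dist [DecidableEq Ω'] (p : Ω → ℝ) (T : Ω → Ω') (A : Ω' → β) :
    distOf (distOf p T) A = distOf p (fun ω => A (T ω)) := by
  funext b
  have := sum_distOf p T (fun t => if A t = b then 1 else 0)
  simpa [distOf] using this

lemma ent_map [DecidableEq Ω'] (p : Ω → ℝ) (T : Ω → Ω') (A : Ω' → β) :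
    entRV (distOf p T) A = entRV p (fun ω => A (T ω)) := by
  unfold entRV; rw [dist_dist]

lemma condEnt_map [DecidableEq Ω'] (p : Ω → ℝ) (T : Ω → Ω') (A : Ω' → β) (C : Ω' → γ) :
    condEnt (distOf p T) A C = condEnt p (fun ω => A (T ω)) (fun ω => C (T ω)) := by
  unfold condEnt; rw [ent_map, ent_map]

lemma ent_congr_ae {p : Ω → ℝ} (hp : ∀ ω, 0 ≤ p ω) (A : Ω → α) (B : Ω → β)
    (h : ∀ ω ω', 0 < p ω → 0 < p ω' → (A ω = A ω' ↔ B ω = B ω')) :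
    entRV p A = entRV p B := by
  rw [ent_eq, ent_eq]
  congr 1
  refine Finset.sum_congr rfl fun ω _ => ?_
  rcases (hp ω).eq_or_lt with h0 | h0
  · simp [← h0]
  congr 2
  unfold distOf
  refine Finset.sum_congr rfl fun ω' _ => ?_
  rcases (hp ω').eq_or_lt with h1 | h1
  · simp [← h1]
  simp only [h ω' ω h1 h0]

lemma ent_congr (p : Ω → ℝ) (A : Ω → α) (B : Ω → β)
    (h : ∀ ω ω', (A ω = A ω' ↔ B ω = B ω')) :
    entRV p A = entRV p B := by
  rw [ent_eq, ent_eq]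
  congr 1
  refine Finset.sum_congr rfl fun ω _ => ?_
  congr 2
  unfold distOf
  refine Finset.sum_congr rfl fun ω' _ => ?_
  simp only [h ω' ω]

lemma ent_mono {p : Ω → ℝ} (hp : ∀ ω, 0 ≤ p ω) (A : Ω → α) (B : Ω → β)
    (h : ∀ ω ω', A ω = A ω' → B ω = B ω') :
    entRV p B ≤ entRV p A := by
  rw [ent_eq, ent_eq]
  refine neg_le_neg (Finset.sum_le_sum fun ω _ => ?_)
  rcases (hp ω).eq_or_lt with h0 | h0
  · simp [← h0]
  refine mul_le_mul_of_nonneg_left (Real.log_le_log (dist_pos hp A h0) ?_) h0.le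
  unfold distOf
  refine Finset.sum_le_sum fun ω' _ => ?_
  by_cases h1 : A ω' = A ω
  · simp [h1, h _ _ h1]
  · simp only [h1, if_false]; split_ifs <;> simp [hp]

lemma condEnt_eq {p : Ω → ℝ} (A : Ω → α) (C : Ω → γ) :
    condEnt p A C = -∑ ω, p ω * (Real.log (distOf p (fun ω => (A ω, C ω)) (A ω, C ω))
      - Real.log (distOf p C (C ω))) := by
  unfold condEnt
  rw [ent_eq, ent_eq]
  simp only [mul_sub, Finset.sum_sub_distrib]
  ring

lemma sum_dist_pair (p : Ω → ℝ) (A : Ω → α) (C : Ω → γ) (c : γ) :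
    ∑ a, distOf p (fun ω => (A ω, C ω)) (a, c) = distOf p C c := by
  unfold distOf
  rw [Finset.sum_comm]
  refine Finset.sum_congr rfl fun ω _ => ?_
  by_cases h : C ω = c <;> simp [h]

lemma sum_dist (p : Ω → ℝ) (C : Ω → γ) : ∑ c, distOf p C c = ∑ ω, p ω := by
  simpa using sum_distOf p C (fun _ => 1)

/-- key sum bound for Gibbs -/
lemma gibbs_sum {p : Ω → ℝ} (hp : ∀ ω, 0 ≤ p ω) (A : Ω → α) (C : Ω → γ) (q : α → γ → ℝ)
    (hq : ∀ a c, 0 ≤ q a c) (hq1 : ∀ c, ∑ a, q a c ≤ 1) :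
    ∑ ω, p ω * (distOf p C (C ω) * q (A ω) (C ω) / distOf p (fun ω => (A ω, C ω)) (A ω, C ω))
      ≤ ∑ ω, p ω := by
  have := sum_distOf p (fun ω => (A ω, C ω)) (fun t => distOf p C t.2 * q t.1 t.2 /
    distOf p (fun ω => (A ω, C ω)) t)
  simp only at this
  rw [← this, ← sum_dist p C, Fintype.sum_prod_type_right]
  refine Finset.sum_le_sum fun c _ => ?_
  calc _ ≤ ∑ a, distOf p C c * q a c := by
        refine Finset.sum_le_sum fun a _ => ?_
        have h1 := dist_nonneg hp C c
        rcases (dist_nonneg hp (fun ω => (A ω, C ω)) (a, c)).eq_or_lt with h | h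
        · rw [← h]; simpa using mul_nonneg h1 (hq a c)
        · rw [mul_div_cancel₀ _ h.ne']
    _ ≤ _ := by
        rw [← Finset.mul_sum]
        exact mul_le_of_le_one_right (dist_nonneg hp C c) (hq1 c)

lemma gibbs {p : Ω → ℝ} (hp : ∀ ω, 0 ≤ p ω) (A : Ω → α) (C : Ω → γ) (q : α → γ → ℝ)
    (hq : ∀ a c, 0 ≤ q a c) (hq1 : ∀ c, ∑ a, q a c ≤ 1)
    (hpos : ∀ ω, 0 < p ω → 0 < q (A ω) (C ω)) :
    condEnt p A C ≤ -∑ ω, p ω * Real.log (q (A ω) (C ω)) := by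
  have h := gibbs_sum hp A C q hq hq1
  rw [condEnt_eq]
  have h2 : ∀ ω, p ω * Real.log (q (A ω) (C ω)) -
      p ω * (Real.log (distOf p (fun ω => (A ω, C ω)) (A ω, C ω))
      - Real.log (distOf p C (C ω))) ≤ p ω * (distOf p C (C ω) * q (A ω) (C ω) /
        distOf p (fun ω => (A ω, C ω)) (A ω, C ω)) - p ω := by
    intro ω
    rcases (hp ω).eq_or_lt with h0 | h0
    · simp [← h0]
    have e1 := dist_pos hp C h0
    have e2 := dist_pos hp (fun ω => (A ω, C ω)) h0
    have e3 := hpos ω h0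
    have := Real.log_le_sub_one_of_pos (div_pos (mul_pos e1 e3) e2)
    rw [Real.log_div (mul_pos e1 e3).ne' e2.ne', Real.log_mul e1.ne' e3.ne'] at this
    nlinarith
  have h3 := Finset.sum_le_sum fun ω (_ : ω ∈ Finset.univ) => h2 ω
  simp only [Finset.sum_sub_distrib] at h3
  linarith

/-- the conditional distribution -/
noncomputable def cd (p : Ω → ℝ) (A : Ω → α) (C : Ω → γ) (a : α) (c : γ) : ℝ :=
  distOf p (fun ω => (A ω, C ω)) (a, c) / distOf p C c

lemma cd_nonneg {p : Ω → ℝ} (hp : ∀ ω, 0 ≤ p ω) (A : Ω → α) (C : Ω → γ) (a : α) (c : γ) :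
    0 ≤ cd p A C a c := div_nonneg (dist_nonneg hp _ _) (dist_nonneg hp _ _)

lemma cd_sum (p : Ω → ℝ) (A : Ω → α) (C : Ω → γ) (c : γ) :
    ∑ a, cd p A C a c ≤ 1 := by
  unfold cd
  rw [← Finset.sum_div, sum_dist_pair]
  exact div_self_le_one _

lemma cd_pos {p : Ω → ℝ} (hp : ∀ ω, 0 ≤ p ω) (A : Ω → α) (C : Ω → γ) {ω : Ω} (h : 0 < p ω) :
    0 < cd p A C (A ω) (C ω) :=
  div_pos (dist_pos hp (fun ω => (A ω, C ω)) h) (dist_pos hp _ h)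

lemma condEnt_eq_cd {p : Ω → ℝ} (hp : ∀ ω, 0 ≤ p ω) (A : Ω → α) (C : Ω → γ) :
    condEnt p A C = -∑ ω, p ω * Real.log (cd p A C (A ω) (C ω)) := by
  rw [condEnt_eq]
  congr 1
  refine Finset.sum_congr rfl fun ω _ => ?_
  rcases (hp ω).eq_or_lt with h0 | h0
  · simp [← h0]
  unfold cd
  rw [Real.log_div (dist_pos hp (fun ω => (A ω, C ω)) h0).ne' (dist_pos hp _ h0).ne']

/-- conditioning reduces entropy -/
lemma condEnt_anti {p : Ω → ℝ} (hp : ∀ ω, 0 ≤ p ω) (A : Ω → α) (D : Ω → δ) (h : δ → γ) :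
    condEnt p A D ≤ condEnt p A (fun ω => h (D ω)) := by
  rw [condEnt_eq_cd hp A (fun ω => h (D ω))]
  exact gibbs hp A D (fun a d => cd p A (fun ω => h (D ω)) a (h d))
    (fun _ _ => cd_nonneg hp _ _ _ _) (fun _ => cd_sum _ _ _ _)
    (fun ω hω => cd_pos hp A (fun ω => h (D ω)) hω)

lemma cmi_eq (p : Ω → ℝ) (A : Ω → α) (B : Ω → β) (C : Ω → γ) :
    condMutInfo p A B C = condEnt p B C - condEnt p B (fun ω => (A ω, C ω)) := by
  unfold condMutInfo condEnt
  rw [ent_congr p (fun ω => (A ω, B ω, C ω)) (fun ω => (B ω, A ω, C ω))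
    (by intros; simp only [Prod.mk.injEq]; tauto)]
  ring

lemma cmi_nonneg {p : Ω → ℝ} (hp : ∀ ω, 0 ≤ p ω) (A : Ω → α) (B : Ω → β) (C : Ω → γ) :
    0 ≤ condMutInfo p A B C := by
  rw [cmi_eq]
  have := condEnt_anti hp B (fun ω => (A ω, C ω)) Prod.snd
  linarith

/-- equality in Gibbs -/
lemma gibbs_eq {p : Ω → ℝ} (hp : ∀ ω, 0 ≤ p ω) (A : Ω → α) (C : Ω → γ) (q : α → γ → ℝ)
    (hq : ∀ a c, 0 ≤ q a c) (hq1 : ∀ c, ∑ a, q a c ≤ 1)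
    (hpos : ∀ ω, 0 < p ω → 0 < q (A ω) (C ω))
    (heq : -∑ ω, p ω * Real.log (q (A ω) (C ω)) ≤ condEnt p A C) (ω : Ω) (hω : 0 < p ω) :
    q (A ω) (C ω) = cd p A C (A ω) (C ω) := by
  have h := gibbs_sum hp A C q hq hq1
  rw [condEnt_eq] at heq
  set t : Ω → ℝ := fun ω => distOf p C (C ω) * q (A ω) (C ω) /
        distOf p (fun ω => (A ω, C ω)) (A ω, C ω) with ht
  have tpos : ∀ ω, 0 < p ω → 0 < t ω := fun ω h0 =>
    div_pos (mul_pos (dist_pos hp C h0) (hpos ω h0)) (dist_pos hp (fun ω => (A ω, C ω)) h0)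
  have h2 : ∀ ω, p ω * Real.log (q (A ω) (C ω)) -
      p ω * (Real.log (distOf p (fun ω => (A ω, C ω)) (A ω, C ω))
      - Real.log (distOf p C (C ω))) = p ω * Real.log (t ω) := by
    intro ω
    rcases (hp ω).eq_or_lt with h0 | h0
    · simp [← h0]
    have e1 := dist_pos hp C h0
    have e2 := dist_pos hp (fun ω => (A ω, C ω)) h0
    have e3 := hpos ω h0
    simp only [ht]
    rw [Real.log_div (mul_pos e1 e3).ne' e2.ne', Real.log_mul e1.ne' e3.ne']
    ring
  have h3 := Finset.sum_congr (rfl : (Finset.univ : Finset Ω) = _) fun ω _ => h2 ω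
  simp only [Finset.sum_sub_distrib] at h3
  have h4 : ∀ ω ∈ Finset.univ, 0 ≤ p ω * (t ω - 1 - Real.log (t ω)) := by
    intro ω _
    rcases (hp ω).eq_or_lt with h0 | h0
    · simp [← h0]
    have := Real.log_le_sub_one_of_pos (tpos ω h0)
    exact mul_nonneg h0.le (by linarith)
  have h5 : ∑ ω, p ω * (t ω - 1 - Real.log (t ω)) = 0 := by
    refine le_antisymm ?_ (Finset.sum_nonneg h4)
    simp only [mul_sub, Finset.sum_sub_distrib, mul_one]
    simp only [mul_sub, Finset.sum_sub_distrib] at h3 heq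
    linarith
  have h6 := (Finset.sum_eq_zero_iff_of_nonneg h4).1 h5 ω (Finset.mem_univ _)
  have h7 : t ω = 1 := by
    by_contra hne
    have := Real.log_lt_sub_one_of_pos (tpos ω hω) hne
    rcases mul_eq_zero.1 h6 with h8 | h8 <;> linarith
  have e1 := dist_pos hp C hω
  have e2 := dist_pos hp (fun ω => (A ω, C ω)) hω
  simp only [ht] at h7
  unfold cd
  field_simp at h7 ⊢
  linarith

end NI
namespace NI
section
variable {Ω Ω' α β γ δ : Type*} [Fintype Ω] [Fintype Ω']
  [Fintype α] [DecidableEq α] [Fintype β] [DecidableEq β] [Fintype γ] [DecidableEq γ]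
  [Fintype δ] [DecidableEq δ]

lemma cmi_eq' (p : Ω → ℝ) (A : Ω → α) (B : Ω → β) (C : Ω → γ) :
    condMutInfo p A B C = condEnt p A C - condEnt p A (fun ω => (B ω, C ω)) := by
  unfold condMutInfo condEnt
  ring

lemma cmi_zero {p : Ω → ℝ} (hp : ∀ ω, 0 ≤ p ω) (A : Ω → α) (B : Ω → β) (C : Ω → γ)
    (h : condMutInfo p A B C = 0) (ω : Ω) (hω : 0 < p ω) :
    cd p A C (A ω) (C ω) = cd p A (fun ω => (B ω, C ω)) (A ω) (B ω, C ω) := by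
  rw [cmi_eq', condEnt_eq_cd hp A C] at h
  exact gibbs_eq hp A (fun ω => (B ω, C ω)) (fun a d => cd p A C a d.2)
    (fun _ _ => cd_nonneg hp _ _ _ _) (fun _ => cd_sum _ _ _ _) (fun ω hω => cd_pos hp A C hω)
    (by simp only; linarith) ω hω

lemma cmi_map [DecidableEq Ω'] (p : Ω → ℝ) (T : Ω → Ω') (A : Ω' → α) (B : Ω' → β) (C : Ω' → γ) :
    condMutInfo (distOf p T) A B C =
      condMutInfo p (fun ω => A (T ω)) (fun ω => B (T ω)) (fun ω => C (T ω)) := by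
  unfold condMutInfo; simp only [ent_map]

/-- zero conditional entropy: function almost surely -/
lemma condEnt_zero {p : Ω → ℝ} (hp : ∀ ω, 0 ≤ p ω) (A : Ω → α) (C : Ω → γ)
    (h : condEnt p A C = 0) (ω ω' : Ω) (hω : 0 < p ω) (hω' : 0 < p ω') (hC : C ω = C ω') :
    A ω = A ω' := by
  rw [condEnt_eq, neg_eq_zero] at h
  have hle : ∀ ω, distOf p (fun ω => (A ω, C ω)) (A ω, C ω) ≤ distOf p C (C ω) := by
    intro ω
    unfold distOf
    refine Finset.sum_le_sum fun ω' _ => ?_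
    by_cases h1 : C ω' = C ω <;> by_cases h2 : A ω' = A ω <;> simp [h1, h2, hp]
  have h4 : ∀ ω ∈ Finset.univ, 
      p ω * (Real.log (distOf p (fun ω => (A ω, C ω)) (A ω, C ω))
      - Real.log (distOf p C (C ω))) ≤ 0 := by
    intro ω _
    rcases (hp ω).eq_or_lt with h0 | h0
    · simp [← h0]
    have := Real.log_le_log (dist_pos hp (fun ω => (A ω, C ω)) h0) (hle ω)
    exact mul_nonpos_of_nonneg_of_nonpos h0.le (by linarith)
  have h6 := (Finset.sum_eq_zero_iff_of_nonpos h4).1 h ω (Finset.mem_univ _)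
  have h7 := (mul_eq_zero.1 h6).resolve_left hω.ne'
  have h8 := Real.log_injOn_pos (dist_pos hp (fun ω => (A ω, C ω)) hω) (dist_pos hp C hω)
    (by linarith)
  by_contra hne
  have : distOf p (fun ω => (A ω, C ω)) (A ω, C ω) < distOf p C (C ω) := by
    unfold distOf
    refine Finset.sum_lt_sum (fun ω' _ => ?_) ⟨ω', Finset.mem_univ _, ?_⟩
    · by_cases h1 : C ω' = C ω <;> by_cases h2 : A ω' = A ω <;> simp [h1, h2, hp]
    · simp [hC, Ne.symm hne, hω']
  linarith
end

lemma perfect_to_asymp {𝒳 𝒴 𝒵 𝒢 : Type}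
    [Fintype 𝒳] [DecidableEq 𝒳] [Fintype 𝒴] [DecidableEq 𝒴]
    [Fintype 𝒵] [DecidableEq 𝒵] [Fintype 𝒢] [DecidableEq 𝒢]
    (pXY : 𝒳 × 𝒴 → ℝ) (hp : IsPMF pXY)
    (f : 𝒳 → 𝒴 → 𝒵) (g : 𝒳 → 𝒴 → 𝒢) (h : PerfectlySecurelyComputableNI pXY f g) :
    AsympSecurelyComputableNI pXY f g := by
  classical
  obtain ⟨u, pU, hU, h1, h2, h3⟩ := h
  set P : (𝒳 × 𝒴) × Fin u → ℝ := fun ω => pXY ω.1 * pU ω.1.1 ω.1.2 ω.2 with hP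
  have hPn : ∀ ω, 0 ≤ P ω := fun ω => mul_nonneg (hp.1 _) ((hU _ _).1 _)
  obtain ⟨⟨x0, y0⟩, -⟩ : ∃ s : 𝒳 × 𝒴, pXY s ≠ 0 := by
    by_contra hc
    push Not at hc
    have := hp.2
    simp [hc] at this
  -- kernel for Alice
  let a : 𝒳 → Fin u → ℝ := fun x v =>
    if distOf P (fun ω => ω.1.1) x = 0 then pU x y0 v
    else cd P (fun ω => ω.2) (fun ω => ω.1.1) v x
  have ha0 : ∀ x v, 0 ≤ a x v := by
    intro x v
    simp only [a]
    split_ifs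
    · exact (hU _ _).1 _
    · exact cd_nonneg hPn _ _ _ _
  have ha1 : ∀ x, ∑ v, a x v = 1 := by
    intro x
    simp only [a]
    split_ifs with hx
    · exact (hU _ _).2
    · unfold cd
      rw [← Finset.sum_div, sum_dist_pair, div_self hx]
  have hle : ∀ x y, 0 < pXY (x, y) → ∀ v, pU x y v ≤ a x v := by
    intro x y hxy v
    rcases ((hU x y).1 v).eq_or_lt with h0 | h0
    · rw [← h0]; exact ha0 x v
    have hω : 0 < P ((x, y), v) := mul_pos hxy h0
    have e := cmi_zero hPn _ _ _ h1 ((x, y), v) hω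
    have hx := dist_pos hPn (fun ω => ω.1.1) hω
    simp only [a]
    rw [if_neg hx.ne']
    simp only at e
    rw [e]
    unfold cd
    have e1 : distOf P (fun ω => (ω.2, ω.1.2, ω.1.1)) (v, y, x) = pXY (x, y) * pU x y v := by
      unfold distOf
      rw [Finset.sum_eq_single ((x, y), v)]
      · simp [hP]
      · rintro ⟨⟨x', y'⟩, v'⟩ _ hne
        rw [if_neg]
        intro hh; apply hne; simp only [Prod.mk.injEq] at hh ⊢; tauto
      · simp
    have e2 : distOf P (fun ω => (ω.1.2, ω.1.1)) (y, x) = pXY (x, y) := by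
      rw [← sum_dist_pair P (fun ω => ω.2)]
      have : ∀ v, distOf P (fun ω => (ω.2, ω.1.2, ω.1.1)) (v, y, x) = pXY (x, y) * pU x y v := by
        intro v
        unfold distOf
        rw [Finset.sum_eq_single ((x, y), v)]
        · simp [hP]
        · rintro ⟨⟨x', y'⟩, v'⟩ _ hne
          rw [if_neg]
          intro hh; apply hne; simp only [Prod.mk.injEq] at hh ⊢; tauto
        · simp
      simp only [this]
      rw [← Finset.mul_sum, (hU x y).2, mul_one]
    rw [e1, e2, mul_comm, mul_div_cancel_right₀ _ hxy.ne']
  have hPa : ∀ x y v, pXY (x, y) * pU x y v = pXY (x, y) * a x v := by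
    intro x y v
    rcases (hp.1 (x, y)).eq_or_lt with h0 | h0
    · simp [← h0]
    congr 1
    exact (Finset.sum_eq_sum_iff_of_le fun v _ => hle x y h0 v).1
      (by rw [(hU x y).2, ha1]) v (Finset.mem_univ _)
  -- decoder
  let D : Fin u → 𝒴 → 𝒵 := fun v y =>
    if hh : ∃ x, 0 < P ((x, y), v) then f hh.choose y else f x0 y
  have hD : ∀ x y v, 0 < P ((x, y), v) → D v y = f x y := by
    intro x y v hω
    have hh : ∃ x, 0 < P ((x, y), v) := ⟨x, hω⟩
    simp only [D]
    rw [dif_pos hh]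
    exact condEnt_zero hPn _ _ h2 ((hh.choose, y), v) ((x, y), v) hh.choose_spec hω rfl
  let T : (𝒳 × 𝒴) × Fin u → (Fin 1 → 𝒳 × 𝒴) × Fin u × (Fin 1 → 𝒵) :=
    fun ω => (fun _ => ω.1, ω.2, fun _ => f ω.1.1 ω.1.2)
  let a' : (Fin 1 → 𝒳) → Fin u → ℝ := fun xv => a (xv 0)
  let b' : Fin u → (Fin 1 → 𝒴) → (Fin 1 → 𝒵) → ℝ := fun v yv zv =>
    if zv = fun _ => D v (yv 0) then 1 else 0
  have hJ : jointNI pXY 1 u a' b' = distOf P T := by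
    funext ω
    obtain ⟨w, v, z⟩ := ω
    have hw : w = fun _ => w 0 := by funext i; rw [Subsingleton.elim i 0]
    obtain ⟨⟨x, y⟩, hs⟩ : ∃ s, w 0 = s := ⟨_, rfl⟩
    rw [hs] at hw
    subst hw
    unfold distOf jointNI
    rw [Finset.sum_eq_single ((x, y), v)]
    · simp only [T, a', b', Fin.prod_univ_one]
      rw [← hPa]
      change P ((x, y), v) * _ = _
      rcases (hPn ((x, y), v)).eq_or_lt with h0 | h0
      · simp [← h0]
      · rw [hD x y v h0]
        by_cases hz : z = fun _ => f x y
        · simp [hz]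
        · simp [hz, Ne.symm hz]
    · rintro ⟨s, v'⟩ _ hne
      rw [if_neg]
      intro hh
      apply hne
      simp only [T, Prod.mk.injEq] at hh ⊢
      exact ⟨congrFun hh.1 0, hh.2.1⟩
    · simp
  intro ε hε
  refine ⟨1, u, one_pos, a', b', fun xv => ⟨ha0 _, ha1 _⟩, fun m yv => ⟨fun z => ?_, ?_⟩, ?_, ?_⟩
  · simp only [b']; split_ifs <;> norm_num
  · simp [b']
  · rw [hJ]
    have : probOf (distOf P T) (fun ω => ω.2.2 ≠ fun i => f (ω.1 i).1 (ω.1 i).2) = 0 := by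
      have := sum_distOf P T (fun ω => if (ω.2.2 ≠ fun i => f (ω.1 i).1 (ω.1 i).2) then 1 else 0)
      unfold probOf
      simpa [T] using this
    rw [this]; exact hε.le
  · rw [hJ, cmi_map]
    refine le_trans (le_of_eq ?_) (mul_pos (by norm_num) hε).le
    rw [← h3]
    have hc : ∀ {τ : Type} (s t : τ), ((fun _ : Fin 1 => s) = fun _ => t) ↔ s = t := fun s t =>
      ⟨fun h => congrFun h 0, fun h => by rw [h]⟩
    unfold condMutInfo
    refine congrArg₂ _ (congrArg₂ _ (congrArg₂ _ ?_ ?_) ?_) ?_ <;>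
    · apply ent_congr
      intro ω ω'
      simp only [T, Prod.mk.injEq, hc]
end NI
namespace NI

lemma le_probOf {Ω : Type*} [Fintype Ω] {p : Ω → ℝ} (hp : ∀ ω, 0 ≤ p ω) (E : Ω → Prop) (ω : Ω)
    (h : E ω) : p ω ≤ probOf p E := by
  classical
  unfold probOf
  refine le_trans (le_of_eq ?_) (Finset.single_le_sum
    (fun ω _ => by split_ifs <;> simp [hp]) (Finset.mem_univ ω))
  rw [if_pos h]

/-- single-letter law -/
noncomputable def lawK {𝒳 𝒴 Φ : Type} (pXY : 𝒳 × 𝒴 → ℝ) (κ : 𝒳 → Φ → ℝ) : (𝒳 × 𝒴) × Φ → ℝ :=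
  fun ω => pXY ω.1 * κ ω.1.1 ω.2

lemma lawK_pair {𝒳 𝒴 Φ : Type} [Fintype 𝒳] [DecidableEq 𝒳] [Fintype 𝒴] [DecidableEq 𝒴]
    [Fintype Φ] [DecidableEq Φ] (pXY : 𝒳 × 𝒴 → ℝ) (κ : 𝒳 → Φ → ℝ) (x : 𝒳) (y : 𝒴) (v : Φ) :
    distOf (lawK pXY κ) (fun ω => (ω.2, ω.1.2, ω.1.1)) (v, y, x) = pXY (x, y) * κ x v := by
  unfold distOf
  rw [Finset.sum_eq_single ((x, y), v)]
  · simp [lawK]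
  · rintro ⟨⟨x', y'⟩, v'⟩ _ hne
    rw [if_neg]
    intro hh; apply hne; simp only [Prod.mk.injEq] at hh ⊢; tauto
  · simp

lemma lawK_markov {𝒳 𝒴 Φ : Type} [Fintype 𝒳] [DecidableEq 𝒳] [Fintype 𝒴] [DecidableEq 𝒴]
    [Fintype Φ] [DecidableEq Φ] (pXY : 𝒳 × 𝒴 → ℝ) (hp : ∀ s, 0 ≤ pXY s) (κ : 𝒳 → Φ → ℝ)
    (h0 : ∀ x v, 0 ≤ κ x v) (h1 : ∀ x, ∑ v, κ x v = 1) :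
    condMutInfo (lawK pXY κ) (fun ω => ω.2) (fun ω => ω.1.2) (fun ω => ω.1.1) = 0 := by
  have hP : ∀ ω, 0 ≤ lawK pXY κ ω := fun ω => mul_nonneg (hp _) (h0 _ _)
  refine le_antisymm ?_ (cmi_nonneg hP _ _ _)
  rw [cmi_eq', condEnt_eq_cd hP (fun ω => ω.2) (fun ω => (ω.1.2, ω.1.1))]
  have := gibbs hP (fun ω => ω.2) (fun ω => ω.1.1) (fun v x => κ x v) (fun _ _ => h0 _ _)
    (fun x => (h1 x).le) (fun ω hω => by
      rcases (h0 ω.1.1 ω.2).eq_or_lt with h | h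
      · simp [lawK, ← h] at hω
      · exact h)
  refine sub_nonpos.2 (this.trans (le_of_eq ?_))
  congr 1
  refine Finset.sum_congr rfl fun ω _ => ?_
  obtain ⟨⟨x, y⟩, v⟩ := ω
  rcases (hp (x, y)).eq_or_lt with h | h
  · simp [lawK, ← h]
  congr 2
  unfold cd
  rw [← sum_dist_pair (lawK pXY κ) (fun ω => ω.2) (fun ω => (ω.1.2, ω.1.1)) (y, x)]
  simp only [lawK_pair]
  rw [← Finset.mul_sum, h1, mul_one, mul_comm, mul_div_cancel_right₀ _ h.ne']

lemma lawK_fst {𝒳 𝒴 Φ : Type} [Fintype 𝒳] [DecidableEq 𝒳] [Fintype 𝒴] [DecidableEq 𝒴]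
    [Fintype Φ] [DecidableEq Φ] (pXY : 𝒳 × 𝒴 → ℝ) (κ : 𝒳 → Φ → ℝ)
    (h1 : ∀ x, ∑ v, κ x v = 1) :
    distOf (lawK pXY κ) Prod.fst = pXY := by
  funext s
  unfold distOf
  rw [Fintype.sum_prod_type]
  simp only [lawK]
  rw [Finset.sum_eq_single s]
  · simp [← Finset.mul_sum, h1]
  · intro t _ hne; simp [hne]
  · simp

lemma continuous_ent_lawK {𝒳 𝒴 Φ β : Type} [Fintype 𝒳] [Fintype 𝒴]
    [Fintype Φ] [Fintype β] [DecidableEq β] (pXY : 𝒳 × 𝒴 → ℝ) (A : (𝒳 × 𝒴) × Φ → β) :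
    Continuous (fun κ : 𝒳 → Φ → ℝ => entRV (lawK pXY κ) A) := by
  unfold entRV entD
  refine (continuous_finsetSum _ fun b _ => ?_).neg
  refine Real.continuous_mul_log.comp ?_
  unfold distOf lawK
  refine continuous_finsetSum _ fun ω _ => ?_
  split_ifs <;> fun_prop

lemma continuous_prob_lawK {𝒳 𝒴 Φ : Type} [Fintype 𝒳] [Fintype 𝒴]
    [Fintype Φ] (pXY : 𝒳 × 𝒴 → ℝ) (E : (𝒳 × 𝒴) × Φ → Prop) :
    Continuous (fun κ : 𝒳 → Φ → ℝ => probOf (lawK pXY κ) E) := by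
  unfold probOf lawK
  refine continuous_finsetSum _ fun ω _ => ?_
  split_ifs <;> fun_prop

lemma limit_perfect {𝒳 𝒴 𝒵 𝒢 : Type}
    [Fintype 𝒳] [DecidableEq 𝒳] [Fintype 𝒴] [DecidableEq 𝒴]
    [Fintype 𝒵] [DecidableEq 𝒵] [Fintype 𝒢] [DecidableEq 𝒢]
    (pXY : 𝒳 × 𝒴 → ℝ) (hp : IsPMF pXY)
    (f : 𝒳 → 𝒴 → 𝒵) (g : 𝒳 → 𝒴 → 𝒢)
    (H : ∀ ε : ℝ, 0 < ε → ∃ κ : 𝒳 → (𝒴 → 𝒵) → ℝ, (∀ x v, 0 ≤ κ x v) ∧ (∀ x, ∑ v, κ x v = 1) ∧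
      probOf (lawK pXY κ) (fun ω => ω.2 ω.1.2 ≠ f ω.1.1 ω.1.2) ≤ ε ∧
      condEnt pXY (fun s => g s.1 s.2) (fun s => (f s.1 s.2, s.2)) -
        condEnt (lawK pXY κ) (fun ω => g ω.1.1 ω.1.2) (fun ω => (ω.2, ω.1.2)) ≤ ε) :
    PerfectlySecurelyComputableNI pXY f g := by
  classical
  set c0 := condEnt pXY (fun s => g s.1 s.2) (fun s => (f s.1 s.2, s.2)) with hc0
  let K : Set (𝒳 → (𝒴 → 𝒵) → ℝ) := Set.univ.pi fun _ => stdSimplex ℝ (𝒴 → 𝒵)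
  have hK : ∀ κ, κ ∈ K ↔ (∀ x v, 0 ≤ κ x v) ∧ (∀ x, ∑ v, κ x v = 1) := by
    intro κ
    simp only [K, Set.mem_univ_pi, stdSimplex, Set.mem_setOf_eq]
    exact forall_and
  have hKc : IsCompact K := isCompact_univ_pi fun _ => isCompact_stdSimplex ℝ _
  let J : (𝒳 → (𝒴 → 𝒵) → ℝ) → ℝ := fun κ =>
    max (probOf (lawK pXY κ) (fun ω => ω.2 ω.1.2 ≠ f ω.1.1 ω.1.2))
      (c0 - condEnt (lawK pXY κ) (fun ω => g ω.1.1 ω.1.2) (fun ω => (ω.2, ω.1.2)))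
  have hJ : Continuous J := by
    refine (continuous_prob_lawK _ _).max (continuous_const.sub ?_)
    unfold condEnt
    exact (continuous_ent_lawK _ _).sub (continuous_ent_lawK _ _)
  have hne : K.Nonempty := by
    obtain ⟨κ, h0, h1, -⟩ := H 1 one_pos
    exact ⟨κ, (hK κ).2 ⟨h0, h1⟩⟩
  obtain ⟨κ, hκ, hmin⟩ := hKc.exists_isMinOn hne hJ.continuousOn
  have hJ0 : J κ ≤ 0 := by
    refine le_of_forall_pos_le_add fun ε hε => ?_
    obtain ⟨κ', h0, h1, h2, h3⟩ := H ε hε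
    have : J κ ≤ J κ' := hmin ((hK κ').2 ⟨h0, h1⟩)
    have : J κ' ≤ ε := max_le h2 h3
    linarith
  obtain ⟨h0, h1⟩ := (hK κ).1 hκ
  have hP : ∀ ω, 0 ≤ lawK pXY κ ω := fun ω => mul_nonneg (hp.1 _) (h0 _ _)
  have herr := (le_max_left _ _).trans hJ0
  have hent := (le_max_right _ _).trans hJ0
  have hdec : ∀ ω, 0 < lawK pXY κ ω → ω.2 ω.1.2 = f ω.1.1 ω.1.2 := by
    intro ω hω
    by_contra hc
    have := le_probOf hP (fun ω => ω.2 ω.1.2 ≠ f ω.1.1 ω.1.2) ω hc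
    linarith
  let e := Fintype.equivFin (𝒴 → 𝒵)
  let T : (𝒳 × 𝒴) × (𝒴 → 𝒵) → (𝒳 × 𝒴) × Fin (Fintype.card (𝒴 → 𝒵)) := fun ω => (ω.1, e ω.2)
  have hT : (fun ω : (𝒳 × 𝒴) × Fin (Fintype.card (𝒴 → 𝒵)) => pXY ω.1 * κ ω.1.1 (e.symm ω.2))
      = distOf (lawK pXY κ) T := by
    funext ω
    unfold distOf
    rw [Finset.sum_eq_single (ω.1, e.symm ω.2)]
    · simp [T, lawK]
    · rintro ⟨s, v⟩ _ hne
      rw [if_neg]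
      rintro rfl
      apply hne
      simp [T]
    · simp
  refine ⟨_, fun x _ v => κ x (e.symm v), fun x y => ⟨fun v => h0 _ _, ?_⟩, ?_, ?_, ?_⟩
  · rw [← h1 x]; exact Equiv.sum_comp e.symm (κ x)
  · simp only [hT]
    rw [cmi_map, ← lawK_markov pXY hp.1 κ h0 h1]
    unfold condMutInfo
    refine congrArg₂ _ (congrArg₂ _ (congrArg₂ _ ?_ ?_) ?_) ?_ <;>
    · apply ent_congr
      intro ω ω'
      simp only [T, Prod.mk.injEq, e.apply_eq_iff_eq]
  · simp only [hT]
    rw [condEnt_map]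
    unfold condEnt
    rw [sub_eq_zero]
    apply ent_congr_ae hP
    intro ω ω' hω hω'
    simp only [T, Prod.mk.injEq, e.apply_eq_iff_eq]
    refine ⟨fun h => h.2, fun h => ⟨?_, h⟩⟩
    rw [← hdec ω hω, ← hdec ω' hω', h.1, h.2]
  · simp only [hT]
    rw [cmi_map]
    refine le_antisymm ?_ (cmi_nonneg hP _ _ _)
    rw [cmi_eq]
    have e1 : condEnt (lawK pXY κ) (fun ω => g (T ω).1.1 (T ω).1.2)
        (fun ω => (f (T ω).1.1 (T ω).1.2, (T ω).1.2)) = c0 := by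
      rw [hc0]
      conv_rhs => rw [← lawK_fst pXY κ h1]
      rw [condEnt_map]
    have e2 : condEnt (lawK pXY κ) (fun ω => g (T ω).1.1 (T ω).1.2)
        (fun ω => ((T ω).2, f (T ω).1.1 (T ω).1.2, (T ω).1.2)) =
        condEnt (lawK pXY κ) (fun ω => g ω.1.1 ω.1.2) (fun ω => (ω.2, ω.1.2)) := by
      unfold condEnt
      congr 1 <;>
      · apply ent_congr_ae hP
        intro ω ω' hω hω'
        simp only [T, Prod.mk.injEq, e.apply_eq_iff_eq]
        have k1 := hdec ω hω
        have k2 := hdec ω' hω'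
        constructor
        · tauto
        · intro h
          have : f ω.1.1 ω.1.2 = f ω'.1.1 ω'.1.2 := by
            rw [← k1, ← k2]; simp [h]
          tauto
    rw [e1, e2]
    exact hent
end NI
namespace NI

section iid
variable {σ β : Type} [Fintype σ] [DecidableEq σ] [Fintype β] [DecidableEq β] {n : ℕ}

/-- product law -/
noncomputable def pn (p : σ → ℝ) (n : ℕ) : (Fin n → σ) → ℝ := fun w => ∏ i, p (w i)

lemma pn_nonneg {p : σ → ℝ} (hp : ∀ s, 0 ≤ p s) (w : Fin n → σ) : 0 ≤ pn p n w :=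
  Finset.prod_nonneg fun _ _ => hp _

lemma sum_prod_pi (h : Fin n → σ → ℝ) : ∑ w : Fin n → σ, ∏ i, h i (w i) = ∏ i, ∑ s, h i s := by
  rw [Finset.prod_univ_sum, Fintype.piFinset_univ]

lemma pn_sum {p : σ → ℝ} (hp : IsPMF p) : ∑ w, pn p n w = 1 := by
  unfold pn
  rw [sum_prod_pi (fun _ => p)]
  simp [hp.2]

lemma pn_update (p : σ → ℝ) (w : Fin n → σ) (i : Fin n) (t : σ) :
    pn p n (Function.update w i t) * p (w i) = pn p n w * p t := by
  unfold pn
  rw [← Finset.mul_prod_erase Finset.univ _ (Finset.mem_univ i),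
    ← Finset.mul_prod_erase Finset.univ (fun i => p (w i)) (Finset.mem_univ i)]
  have : ∏ j ∈ Finset.univ.erase i, p (Function.update w i t j)
      = ∏ j ∈ Finset.univ.erase i, p (w j) := by
    refine Finset.prod_congr rfl fun j hj => ?_
    rw [Function.update_of_ne (Finset.ne_of_mem_erase hj)]
  rw [this]
  simp only [Function.update_self]
  ring

/-- resampling one coordinate -/
lemma resample {p : σ → ℝ} (hp : IsPMF p) (i : Fin n) (φ : (Fin n → σ) → ℝ) :
    ∑ w, pn p n w * φ w = ∑ w, ∑ t, pn p n w * p t * φ (Function.update w i t) := by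
  let e : (Fin n → σ) × σ ≃ (Fin n → σ) × σ :=
    Function.Involutive.toPerm (fun z => (Function.update z.1 i z.2, z.1 i)) (by
      rintro ⟨w, t⟩; simp)
  have h1 : ∑ w, pn p n w * φ w = ∑ z : (Fin n → σ) × σ, pn p n z.1 * p z.2 * φ z.1 := by
    rw [Fintype.sum_prod_type]
    refine Finset.sum_congr rfl fun w _ => ?_
    simp only
    rw [← Finset.sum_mul, ← Finset.mul_sum, hp.2, mul_one]
  rw [h1, ← Equiv.sum_comp e, Fintype.sum_prod_type]
  refine Finset.sum_congr rfl fun w _ => Finset.sum_congr rfl fun t _ => ?_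
  change pn p n (Function.update w i t) * p (w i) * φ (Function.update w i t) = _
  rw [pn_update]

lemma pn_marg {p : σ → ℝ} (hp : IsPMF p) (i : Fin n) (h : σ → ℝ) :
    ∑ w, pn p n w * h (w i) = ∑ s, p s * h s := by
  rw [resample hp i (fun w => h (w i))]
  simp only [Function.update_self, mul_assoc]
  simp only [← Finset.mul_sum]
  rw [← Finset.sum_mul, pn_sum hp, one_mul]

lemma dist_pn (p : σ → ℝ) (A : σ → β) (v : Fin n → β) :
    distOf (pn p n) (fun w i => A (w i)) v = ∏ i, distOf p A (v i) := by
  unfold distOf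
  rw [← sum_prod_pi (fun i s => if A s = v i then p s else 0)]
  refine Finset.sum_congr rfl fun w _ => ?_
  rw [Finset.prod_ite_zero]
  simp [funext_iff, pn]

lemma ent_pn {p : σ → ℝ} (hp : IsPMF p) (A : σ → β) :
    entRV (pn p n) (fun w i => A (w i)) = n * entRV p A := by
  rw [ent_eq, ent_eq]
  have : ∀ w, pn p n w * Real.log (distOf (pn p n) (fun w i => A (w i)) (fun i => A (w i)))
      = ∑ i, pn p n w * Real.log (distOf p A (A (w i))) := by
    intro w
    rw [dist_pn]
    by_cases h : ∃ i, p (w i) = 0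
    · have : pn p n w = 0 := by
        obtain ⟨i, hi⟩ := h
        exact Finset.prod_eq_zero (Finset.mem_univ i) hi
      simp [this]
    · push Not at h
      rw [Real.log_prod, Finset.mul_sum]
      intro i _
      exact (dist_pos hp.1 A (lt_of_le_of_ne (hp.1 _) (h i).symm)).ne'
  simp only [this]
  rw [Finset.sum_comm]
  simp only [fun i => pn_marg hp i (fun s => Real.log (distOf p A (A s)))]
  simp
end iid

lemma fano {Ω β γ : Type} [Fintype Ω] [Fintype β] [DecidableEq β] [Fintype γ] [DecidableEq γ]
    {p : Ω → ℝ} (hp : IsPMF p) (Z F : Ω → β) (Y : Ω → γ) (δ : ℝ) (h0 : 0 < δ) (h1 : δ < 1)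
    (hE : probOf p (fun ω => Z ω ≠ F ω) ≤ δ) :
    condEnt p Z (fun ω => (F ω, Y ω)) ≤
      -Real.log (1 - δ) + δ * (Real.log (Fintype.card β) - Real.log δ) := by
  classical
  obtain ⟨ω0, -⟩ : ∃ s : Ω, p s ≠ 0 := by
    by_contra hc
    push Not at hc
    have := hp.2
    simp [hc] at this
  haveI : Nonempty β := ⟨Z ω0⟩
  have hN1 : (1:ℝ) ≤ Fintype.card β := by exact_mod_cast Fintype.card_pos
  have hN : (0:ℝ) < Fintype.card β := by linarith
  set N : ℝ := ((Fintype.card β : ℕ) : ℝ) with hNdef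
  have hlN : 0 ≤ Real.log N := Real.log_nonneg hN1
  have hld : Real.log δ ≤ 0 := Real.log_nonpos h0.le h1.le
  have hl1 : Real.log (1 - δ) ≤ 0 := Real.log_nonpos (by linarith) (by linarith)
  have hdN : 0 < δ / N := div_pos h0 hN
  refine (gibbs hp.1 Z (fun ω => (F ω, Y ω))
    (fun z c => (if z = c.1 then (1 - δ) else 0) + δ / N) ?_ ?_ ?_).trans ?_
  · intro a c; split_ifs <;> linarith
  · rintro ⟨c, y⟩
    simp only [Finset.sum_add_distrib, Finset.sum_ite_eq', Finset.mem_univ, if_true,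
      Finset.sum_const, Finset.card_univ, nsmul_eq_mul, ← hNdef]
    rw [mul_div_cancel₀ _ hN.ne']; linarith
  · intro ω _; simp only; split_ifs <;> linarith
  · rw [← Finset.sum_neg_distrib]
    calc _ ≤ ∑ ω, (p ω * (-Real.log (1 - δ)) +
            (if Z ω ≠ F ω then p ω else 0) * (Real.log N - Real.log δ)) := by
          refine Finset.sum_le_sum fun ω _ => ?_
          by_cases h : Z ω = F ω
          · simp only [h, if_true, ne_eq, not_true, if_false, zero_mul, add_zero]
            have := Real.log_le_log (show 0 < 1 - δ by linarith)
              (show 1 - δ ≤ 1 - δ + δ / N by linarith)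
            nlinarith [hp.1 ω]
          · simp only [h, if_false, ne_eq, not_false_iff, if_true, zero_add]
            rw [Real.log_div h0.ne' hN.ne']
            nlinarith [hp.1 ω]
      _ = -Real.log (1 - δ) + probOf p (fun ω => Z ω ≠ F ω) * (Real.log N - Real.log δ) := by
          rw [Finset.sum_add_distrib, ← Finset.sum_mul, ← Finset.sum_mul, hp.2, one_mul]
          congr 2
          unfold probOf
          refine Finset.sum_congr rfl fun ω _ => ?_
          by_cases h : Z ω = F ω <;> simp [h]
      _ ≤ _ := by
          have := mul_le_mul_of_nonneg_right hE (show 0 ≤ Real.log N - Real.log δ by linarith)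
          linarith

lemma gibbs_vec {Ω β γ δ : Type} [Fintype Ω] [Fintype β] [DecidableEq β] [Fintype γ]
    [DecidableEq γ] [Fintype δ] [DecidableEq δ] {n : ℕ}
    {p : Ω → ℝ} (hp : ∀ ω, 0 ≤ p ω) (G : Fin n → Ω → β) (C : Ω → γ) (S : Fin n → γ → δ) :
    condEnt p (fun ω i => G i ω) C ≤ ∑ i, condEnt p (G i) (fun ω => S i (C ω)) := by
  refine (gibbs hp (fun ω i => G i ω) C
    (fun v c => ∏ i, cd p (G i) (fun ω => S i (C ω)) (v i) (S i c)) ?_ ?_ ?_).trans ?_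
  · exact fun v c => Finset.prod_nonneg fun i _ => cd_nonneg hp _ _ _ _
  · intro c
    rw [sum_prod_pi (fun i g => cd p (G i) (fun ω => S i (C ω)) g (S i c))]
    exact Finset.prod_le_one (fun i _ => Finset.sum_nonneg fun _ _ => cd_nonneg hp _ _ _ _)
      (fun i _ => cd_sum _ _ _ _)
  · exact fun ω hω => Finset.prod_pos fun i _ => cd_pos hp (G i) (fun ω => S i (C ω)) hω
  · simp only [fun i => condEnt_eq_cd hp (G i) (fun ω => S i (C ω))]
    rw [Finset.sum_neg_distrib, Finset.sum_comm]
    refine neg_le_neg (Finset.sum_le_sum fun ω _ => ?_)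
    rcases (hp ω).eq_or_lt with h0 | h0
    · simp [← h0]
    rw [Real.log_prod (fun i _ => (cd_pos hp (G i) (fun ω => S i (C ω)) h0).ne'), Finset.mul_sum]

lemma probOf_map {Ω Ω' : Type} [Fintype Ω] [Fintype Ω'] [DecidableEq Ω'] (p : Ω → ℝ)
    (T : Ω → Ω') (E : Ω' → Prop) : probOf (distOf p T) E = probOf p (fun ω => E (T ω)) := by
  classical
  have := sum_distOf p T (fun t => if E t then 1 else 0)
  unfold probOf
  simpa using this
end NI
namespace NI

section proto
variable {𝒳 𝒴 𝒵 𝒢 : Type}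
    [Fintype 𝒳] [DecidableEq 𝒳] [Fintype 𝒴] [DecidableEq 𝒴]
    [Fintype 𝒵] [DecidableEq 𝒵] [Fintype 𝒢] [DecidableEq 𝒢]

lemma joint_sum (pXY : 𝒳 × 𝒴 → ℝ) {n mM : ℕ}
    (a : (Fin n → 𝒳) → Fin mM → ℝ) (b : Fin mM → (Fin n → 𝒴) → (Fin n → 𝒵) → ℝ)
    (hb : ∀ m yv, (∀ z, 0 ≤ b m yv z) ∧ ∑ z, b m yv z = 1)
    (h : (Fin n → 𝒳 × 𝒴) → Fin mM → ℝ) :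
    ∑ ω, jointNI pXY n mM a b ω * h ω.1 ω.2.1 =
      ∑ w, pn pXY n w * ∑ m, a (fun i => (w i).1) m * h w m := by
  rw [Fintype.sum_prod_type]
  refine Finset.sum_congr rfl fun w _ => ?_
  rw [Fintype.sum_prod_type, Finset.mul_sum]
  refine Finset.sum_congr rfl fun m _ => ?_
  simp only [jointNI]
  rw [← Finset.sum_mul, ← Finset.mul_sum, (hb _ _).2]
  unfold pn; ring

lemma joint_pmf (pXY : 𝒳 × 𝒴 → ℝ) (hp : IsPMF pXY) {n mM : ℕ}
    (a : (Fin n → 𝒳) → Fin mM → ℝ) (b : Fin mM → (Fin n → 𝒴) → (Fin n → 𝒵) → ℝ)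
    (ha : ∀ xv, (∀ m, 0 ≤ a xv m) ∧ ∑ m, a xv m = 1)
    (hb : ∀ m yv, (∀ z, 0 ≤ b m yv z) ∧ ∑ z, b m yv z = 1) :
    IsPMF (jointNI pXY n mM a b) := by
  refine ⟨fun ω => mul_nonneg (mul_nonneg (pn_nonneg hp.1 _) ((ha _).1 _)) ((hb _ _).1 _), ?_⟩
  have := joint_sum pXY a b hb (fun _ _ => 1)
  simp only [mul_one] at this
  rw [this]
  simp only [(ha _).2, mul_one, pn_sum hp]

lemma joint_fst (pXY : 𝒳 × 𝒴 → ℝ) {n mM : ℕ}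
    (a : (Fin n → 𝒳) → Fin mM → ℝ) (b : Fin mM → (Fin n → 𝒴) → (Fin n → 𝒵) → ℝ)
    (ha : ∀ xv, (∀ m, 0 ≤ a xv m) ∧ ∑ m, a xv m = 1)
    (hb : ∀ m yv, (∀ z, 0 ≤ b m yv z) ∧ ∑ z, b m yv z = 1) :
    distOf (jointNI pXY n mM a b) Prod.fst = pn pXY n := by
  funext v
  have := joint_sum pXY a b hb (fun w _ => if w = v then 1 else 0)
  unfold distOf
  simp only [mul_ite, mul_one, mul_zero] at this
  rw [this, Finset.sum_eq_single v]
  · simp [(ha _).2]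
  · intro w _ hne; simp [hne]
  · simp

/-- MAP weights -/
noncomputable def W (pXY : 𝒳 × 𝒴 → ℝ) (f : 𝒳 → 𝒴 → 𝒵) {n mM : ℕ}
    (a : (Fin n → 𝒳) → Fin mM → ℝ) (i : Fin n) (m : Fin mM) (yv : Fin n → 𝒴) (z : 𝒵) : ℝ :=
  ∑ w : Fin n → 𝒳 × 𝒴, if (fun j => (w j).2) = yv then
    (if f (w i).1 (w i).2 = z then pn pXY n w * a (fun j => (w j).1) m else 0) else 0

lemma map_sum (pXY : 𝒳 × 𝒴 → ℝ) (f : 𝒳 → 𝒴 → 𝒵) {n mM : ℕ}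
    (a : (Fin n → 𝒳) → Fin mM → ℝ) (i : Fin n) (c : Fin mM → (Fin n → 𝒴) → 𝒵 → ℝ) :
    ∑ w, pn pXY n w * ∑ m, a (fun j => (w j).1) m * c m (fun j => (w j).2) (f (w i).1 (w i).2)
      = ∑ m, ∑ yv, ∑ z, c m yv z * W pXY f a i m yv z := by
  simp only [Finset.mul_sum]
  rw [Finset.sum_comm]
  refine Finset.sum_congr rfl fun m _ => ?_
  unfold W
  simp only [Finset.mul_sum]
  rw [Finset.sum_congr rfl fun yv _ => Finset.sum_comm, Finset.sum_comm]
  refine Finset.sum_congr rfl fun w _ => ?_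
  rw [Finset.sum_eq_single (fun j => (w j).2)]
  · rw [Finset.sum_eq_single (f (w i).1 (w i).2)]
    · simp only [if_true]; ring
    · intro z _ hne; simp [hne.symm]
    · simp
  · intro yv _ hne; simp [hne.symm]
  · simp

lemma map_err (pXY : 𝒳 × 𝒴 → ℝ) (hp : IsPMF pXY) (f : 𝒳 → 𝒴 → 𝒵) {n mM : ℕ}
    (a : (Fin n → 𝒳) → Fin mM → ℝ) (b : Fin mM → (Fin n → 𝒴) → (Fin n → 𝒵) → ℝ)
    (ha : ∀ xv, (∀ m, 0 ≤ a xv m) ∧ ∑ m, a xv m = 1)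
    (hb : ∀ m yv, (∀ z, 0 ≤ b m yv z) ∧ ∑ z, b m yv z = 1) (i : Fin n)
    (D : Fin mM → (Fin n → 𝒴) → 𝒵)
    (hD : ∀ m yv z, W pXY f a i m yv z ≤ W pXY f a i m yv (D m yv)) :
    probOf (jointNI pXY n mM a b)
      (fun ω => D ω.2.1 (fun j => (ω.1 j).2) ≠ f (ω.1 i).1 (ω.1 i).2) ≤
    probOf (jointNI pXY n mM a b) (fun ω => ω.2.2 ≠ fun j => f (ω.1 j).1 (ω.1 j).2) := by
  classical
  have hJ := joint_pmf pXY hp a b ha hb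
  have h1 : ∀ E : (Fin n → 𝒳 × 𝒴) × Fin mM × (Fin n → 𝒵) → Prop,
      probOf (jointNI pXY n mM a b) E =
        1 - ∑ ω, jointNI pXY n mM a b ω * (if E ω then 0 else 1) := by
    intro E
    rw [eq_sub_iff_add_eq]
    unfold probOf
    rw [← Finset.sum_add_distrib]
    refine Eq.trans ?_ hJ.2
    refine Finset.sum_congr rfl fun ω _ => ?_
    split_ifs <;> simp
  rw [h1, h1]
  refine sub_le_sub_left ?_ _
  have h2 : ∑ ω, jointNI pXY n mM a b ω *
      (if D ω.2.1 (fun j => (ω.1 j).2) ≠ f (ω.1 i).1 (ω.1 i).2 then 0 else 1) =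
      ∑ m, ∑ yv, W pXY f a i m yv (D m yv) := by
    rw [joint_sum pXY a b hb
      (fun w m => if D m (fun j => (w j).2) ≠ f (w i).1 (w i).2 then 0 else 1),
      map_sum pXY f a i (fun m yv z => if D m yv ≠ z then 0 else 1)]
    refine Finset.sum_congr rfl fun m _ => Finset.sum_congr rfl fun yv _ => ?_
    rw [Finset.sum_eq_single (D m yv)]
    · simp
    · intro z _ hne; simp [hne.symm]
    · simp
  have h3 : ∑ ω, jointNI pXY n mM a b ω *
      (if ω.2.2 ≠ (fun j => f (ω.1 j).1 (ω.1 j).2) then 0 else 1) ≤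
      ∑ ω, jointNI pXY n mM a b ω * (if ω.2.2 i = f (ω.1 i).1 (ω.1 i).2 then 1 else 0) := by
    refine Finset.sum_le_sum fun ω _ => mul_le_mul_of_nonneg_left ?_ (hJ.1 ω)
    by_cases h : ω.2.2 = (fun j => f (ω.1 j).1 (ω.1 j).2)
    · have := congrFun h i
      simp [h]
    · simp only [ne_eq, h, not_false_iff, if_true]
      split_ifs <;> norm_num
  have h4 : ∑ ω, jointNI pXY n mM a b ω * (if ω.2.2 i = f (ω.1 i).1 (ω.1 i).2 then 1 else 0)
      = ∑ m, ∑ yv, ∑ z, (∑ zv, b m yv zv * if zv i = z then 1 else 0) * W pXY f a i m yv z := by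
    rw [← map_sum pXY f a i (fun m yv z => ∑ zv, b m yv zv * if zv i = z then 1 else 0),
      Fintype.sum_prod_type]
    refine Finset.sum_congr rfl fun w _ => ?_
    rw [Fintype.sum_prod_type, Finset.mul_sum]
    refine Finset.sum_congr rfl fun m _ => ?_
    rw [Finset.mul_sum, Finset.mul_sum]
    refine Finset.sum_congr rfl fun z _ => ?_
    simp only [jointNI, pn]
    ring
  have h5 : ∑ m, ∑ yv, ∑ z, (∑ zv, b m yv zv * if zv i = z then 1 else 0) * W pXY f a i m yv z
      ≤ ∑ m, ∑ yv, W pXY f a i m yv (D m yv) := by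
    refine Finset.sum_le_sum fun m _ => Finset.sum_le_sum fun yv _ => ?_
    calc _ ≤ ∑ z, (∑ zv, b m yv zv * if zv i = z then 1 else 0) * W pXY f a i m yv (D m yv) := by
          refine Finset.sum_le_sum fun z _ => mul_le_mul_of_nonneg_left (hD m yv z) ?_
          refine Finset.sum_nonneg fun zv _ => mul_nonneg ((hb _ _).1 _) ?_
          split_ifs <;> norm_num
      _ = _ := by
          rw [← Finset.sum_mul, Finset.sum_comm]
          simp [(hb _ _).2]
  have h6 := (h3.trans h4.le).trans h5
  rw [← h2] at h6
  refine le_trans (le_of_eq ?_) (h6.trans (le_of_eq ?_))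
  · refine Finset.sum_congr rfl fun ω _ => ?_
    congr
  · refine Finset.sum_congr rfl fun ω _ => ?_
    congr

lemma push_single (pXY : 𝒳 × 𝒴 → ℝ) (hp : IsPMF pXY) {n mM : ℕ}
    (a : (Fin n → 𝒳) → Fin mM → ℝ) (b : Fin mM → (Fin n → 𝒴) → (Fin n → 𝒵) → ℝ)
    (ha : ∀ xv, (∀ m, 0 ≤ a xv m) ∧ ∑ m, a xv m = 1)
    (hb : ∀ m yv, (∀ z, 0 ≤ b m yv z) ∧ ∑ z, b m yv z = 1) (i : Fin n)
    (D : Fin mM → (Fin n → 𝒴) → 𝒵) :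
    ∃ κ : 𝒳 → (𝒴 → 𝒵) → ℝ, (∀ x v, 0 ≤ κ x v) ∧ (∀ x, ∑ v, κ x v = 1) ∧
      distOf (jointNI pXY n mM a b)
        (fun ω => (ω.1 i, fun y => D ω.2.1 (Function.update (fun j => (ω.1 j).2) i y)))
        = lawK pXY κ := by
  refine ⟨fun x v => ∑ w, pn pXY n w * ∑ m, a (Function.update (fun j => (w j).1) i x) m *
    (if (fun y => D m (Function.update (fun j => (w j).2) i y)) = v then 1 else 0), ?_, ?_, ?_⟩
  · intro x v
    refine Finset.sum_nonneg fun w _ => mul_nonneg (pn_nonneg hp.1 _) (Finset.sum_nonneg fun m _ =>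
      mul_nonneg ((ha _).1 _) ?_)
    split_ifs <;> norm_num
  · intro x
    rw [Finset.sum_comm]
    simp only [← Finset.mul_sum]
    refine Eq.trans ?_ (pn_sum (n := n) hp)
    refine Finset.sum_congr rfl fun w _ => ?_
    rw [Finset.sum_comm]
    simp [(ha _).2]
  · funext s
    obtain ⟨⟨x, y⟩, v⟩ := s
    have := joint_sum pXY a b hb (fun w m => if (w i, fun y => D m (Function.update (fun j => (w j).2) i y)) = ((x, y), v) then 1 else 0)
    simp only [mul_ite, mul_one, mul_zero] at this
    unfold distOf
    rw [this, resample hp i]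
    unfold lawK
    simp only
    rw [Finset.mul_sum]
    refine Finset.sum_congr rfl fun w _ => ?_
    rw [Finset.sum_eq_single (x, y)]
    · have e1 : (fun j => (Function.update w i (x, y) j).1)
          = Function.update (fun j => (w j).1) i x := by
        funext j; by_cases h : j = i
        · subst h; simp
        · simp [h]
      have e2 : (fun j => (Function.update w i (x, y) j).2)
          = Function.update (fun j => (w j).2) i y := by
        funext j; by_cases h : j = i
        · subst h; simp
        · simp [h]
      rw [e1, e2]
      simp only [Function.update_self, Function.update_idem, Prod.mk.injEq, true_and, mul_ite,
        mul_one, mul_zero]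
      ring
    · intro t _ hne
      simp [hne]
    · simp

lemma single_letter (pXY : 𝒳 × 𝒴 → ℝ) (hp : IsPMF pXY) (f : 𝒳 → 𝒴 → 𝒵) (g : 𝒳 → 𝒴 → 𝒢)
    {n mM : ℕ} (hn : 0 < n)
    (a : (Fin n → 𝒳) → Fin mM → ℝ) (b : Fin mM → (Fin n → 𝒴) → (Fin n → 𝒵) → ℝ)
    (ha : ∀ xv, (∀ m, 0 ≤ a xv m) ∧ ∑ m, a xv m = 1)
    (hb : ∀ m yv, (∀ z, 0 ≤ b m yv z) ∧ ∑ z, b m yv z = 1)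
    (δ : ℝ) (h0 : 0 < δ) (h1 : δ < 1)
    (hE : probOf (jointNI pXY n mM a b)
        (fun ω => ω.2.2 ≠ fun i => f (ω.1 i).1 (ω.1 i).2) ≤ δ)
    (hI : condMutInfo (jointNI pXY n mM a b)
        (fun ω => ω.2.1)
        (fun ω => fun i => g (ω.1 i).1 (ω.1 i).2)
        (fun ω => (ω.2.2, fun i => (ω.1 i).2)) ≤ n * δ) :
    ∃ κ : 𝒳 → (𝒴 → 𝒵) → ℝ, (∀ x v, 0 ≤ κ x v) ∧ (∀ x, ∑ v, κ x v = 1) ∧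
      probOf (lawK pXY κ) (fun ω => ω.2 ω.1.2 ≠ f ω.1.1 ω.1.2) ≤ δ ∧
      condEnt pXY (fun s => g s.1 s.2) (fun s => (f s.1 s.2, s.2)) -
        condEnt (lawK pXY κ) (fun ω => g ω.1.1 ω.1.2) (fun ω => (ω.2, ω.1.2)) ≤
        δ + δ * Real.log (Fintype.card 𝒵) - Real.log (1 - δ) - δ * Real.log δ := by
  classical
  obtain ⟨⟨x0, y0⟩, -⟩ : ∃ s : 𝒳 × 𝒴, pXY s ≠ 0 := by
    by_contra hc
    push Not at hc
    have := hp.2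
    simp [hc] at this
  haveI : Nonempty 𝒵 := ⟨f x0 y0⟩
  have hJ := joint_pmf pXY hp a b ha hb
  set P := jointNI pXY n mM a b with hPdef
  have hmax : ∀ i m yv, ∃ z0, ∀ z, W pXY f a i m yv z ≤ W pXY f a i m yv z0 :=
    fun i m yv => Finite.exists_max _
  choose D hD using hmax
  set c0 := condEnt pXY (fun s => g s.1 s.2) (fun s => (f s.1 s.2, s.2)) with hc0
  let S : Fin n → Fin mM × (Fin n → 𝒵) × (Fin n → 𝒴) → (𝒴 → 𝒵) × 𝒴 :=
    fun i c => (fun y => D i c.1 (Function.update c.2.2 i y), c.2.2 i)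
  let ci : Fin n → ℝ := fun i => condEnt P (fun ω => g (ω.1 i).1 (ω.1 i).2)
    (fun ω => S i (ω.2.1, ω.2.2, fun i => (ω.1 i).2))
  -- upper bound
  have hup : condEnt P (fun ω => fun i => g (ω.1 i).1 (ω.1 i).2)
      (fun ω => (ω.2.1, ω.2.2, fun i => (ω.1 i).2)) ≤ ∑ i, ci i :=
    gibbs_vec hJ.1 (fun i ω => g (ω.1 i).1 (ω.1 i).2)
      (fun ω => (ω.2.1, ω.2.2, fun i => (ω.1 i).2)) S
  -- lower bound
  have hfano := fano hJ (fun ω => ω.2.2) (fun ω => fun i => f (ω.1 i).1 (ω.1 i).2)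
    (fun ω => fun i => (ω.1 i).2) δ h0 h1 hE
  have hl1 := condEnt_anti hJ.1 (fun ω => fun i => g (ω.1 i).1 (ω.1 i).2)
    (fun ω => ((fun i => f (ω.1 i).1 (ω.1 i).2), ω.2.2, fun i => (ω.1 i).2)) Prod.snd
  have hl2 : condEnt P (fun ω => fun i => g (ω.1 i).1 (ω.1 i).2)
        (fun ω => ((fun i => f (ω.1 i).1 (ω.1 i).2), fun i => (ω.1 i).2)) -
      condEnt P (fun ω => ω.2.2)
        (fun ω => ((fun i => f (ω.1 i).1 (ω.1 i).2), fun i => (ω.1 i).2)) ≤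
      condEnt P (fun ω => fun i => g (ω.1 i).1 (ω.1 i).2)
        (fun ω => ((fun i => f (ω.1 i).1 (ω.1 i).2), ω.2.2, fun i => (ω.1 i).2)) := by
    unfold condEnt
    have k1 := ent_mono hJ.1
      (fun ω => ((fun i => g (ω.1 i).1 (ω.1 i).2), (fun i => f (ω.1 i).1 (ω.1 i).2), ω.2.2,
        fun i => (ω.1 i).2))
      (fun ω => ((fun i => g (ω.1 i).1 (ω.1 i).2), (fun i => f (ω.1 i).1 (ω.1 i).2),
        fun i => (ω.1 i).2))
      (by intro ω ω'; simp only [Prod.mk.injEq]; tauto)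
    have k2 := ent_congr P
      (fun ω => ((fun i => f (ω.1 i).1 (ω.1 i).2), ω.2.2, fun i => (ω.1 i).2))
      (fun ω => (ω.2.2, (fun i => f (ω.1 i).1 (ω.1 i).2), fun i => (ω.1 i).2))
      (by intro ω ω'; simp only [Prod.mk.injEq]; tauto)
    linarith
  have hl3 : condEnt P (fun ω => fun i => g (ω.1 i).1 (ω.1 i).2)
        (fun ω => ((fun i => f (ω.1 i).1 (ω.1 i).2), fun i => (ω.1 i).2)) = n * c0 := by
    have q1 := condEnt_map P Prod.fst (fun w : Fin n → 𝒳 × 𝒴 => fun i => g (w i).1 (w i).2)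
      (fun w : Fin n → 𝒳 × 𝒴 => ((fun i => f (w i).1 (w i).2), fun i => (w i).2))
    rw [← q1, hPdef, joint_fst pXY a b ha hb, hc0]
    unfold condEnt
    rw [mul_sub, ← ent_pn hp, ← ent_pn hp]
    congr 1
    · apply ent_congr
      intro w w'
      simp only [Prod.mk.injEq, funext_iff, ← forall_and]
    · apply ent_congr
      intro w w'
      simp only [Prod.mk.injEq, funext_iff, ← forall_and]
  rw [cmi_eq] at hI
  have hcard : Real.log (Fintype.card (Fin n → 𝒵)) = n * Real.log (Fintype.card 𝒵) := by
    simp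
  rw [hcard] at hfano
  have hn1 : (1:ℝ) ≤ n := by exact_mod_cast hn
  have hs1 : Real.log (1 - δ) ≤ 0 := Real.log_nonpos (by linarith) (by linarith)
  have hs2 : δ * Real.log δ ≤ 0 :=
    mul_nonpos_of_nonneg_of_nonpos h0.le (Real.log_nonpos h0.le h1.le)
  have hsum : ∑ i : Fin n, (c0 - ci i) ≤ ∑ i : Fin n,
      (δ + δ * Real.log (Fintype.card 𝒵) - Real.log (1 - δ) - δ * Real.log δ) := by
    rw [Finset.sum_sub_distrib]
    simp only [Finset.sum_const, Finset.card_univ, Fintype.card_fin, nsmul_eq_mul]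
    have : ((n:ℝ) - 1) * (Real.log (1 - δ) + δ * Real.log δ) ≤ 0 :=
      mul_nonpos_of_nonneg_of_nonpos (by linarith) (by linarith)
    linarith
  haveI : Nonempty (Fin n) := ⟨⟨0, hn⟩⟩
  obtain ⟨i, -, hi⟩ := Finset.exists_le_of_sum_le Finset.univ_nonempty hsum
  obtain ⟨κ, hκ0, hκ1, hκ⟩ := push_single pXY hp a b ha hb i (D i)
  refine ⟨κ, hκ0, hκ1, ?_, ?_⟩
  · rw [← hκ, probOf_map]
    refine le_trans (le_of_eq ?_) ((map_err pXY hp f a b ha hb i (D i) (hD i)).trans hE)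
    congr 1
    funext ω
    have : Function.update (fun j => (ω.1 j).2) i (ω.1 i).2 = fun j => (ω.1 j).2 :=
      Function.update_eq_self i (fun j => (ω.1 j).2)
    simp only [this]
  · rw [← hκ, condEnt_map]
    exact hi

lemma asymp_to_perfect (pXY : 𝒳 × 𝒴 → ℝ) (hp : IsPMF pXY) (f : 𝒳 → 𝒴 → 𝒵) (g : 𝒳 → 𝒴 → 𝒢)
    (h : AsympSecurelyComputableNI pXY f g) : PerfectlySecurelyComputableNI pXY f g := by
  refine limit_perfect pXY hp f g fun ε hε => ?_
  let η : ℝ → ℝ := fun δ =>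
    δ + δ * Real.log (Fintype.card 𝒵) - Real.log (1 - δ) - δ * Real.log δ
  have hη : ContinuousAt η 0 := by
    refine ContinuousAt.sub (ContinuousAt.sub (by fun_prop) ?_) Real.continuous_mul_log.continuousAt
    exact ContinuousAt.log (by fun_prop) (by norm_num)
  have hη0 : η 0 = 0 := by simp [η]
  have h1 : ∀ᶠ δ in nhds (0:ℝ), η δ < ε := hη.eventually_lt_const (by rw [hη0]; exact hε)
  have h2 : ∀ᶠ δ in nhds (0:ℝ), δ < min ε 1 := gt_mem_nhds (by positivity)
  have h3 : ∀ᶠ δ in nhdsWithin (0:ℝ) (Set.Ioi 0), 0 < δ := self_mem_nhdsWithin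
  obtain ⟨δ, ⟨hd1, hd2⟩, hd0⟩ := (((h1.and h2).filter_mono nhdsWithin_le_nhds).and h3).exists
  obtain ⟨n, mM, hn, a, b, ha, hb, hE, hI⟩ := h δ hd0
  obtain ⟨κ, k0, k1, k2, k3⟩ := single_letter pXY hp f g hn a b ha hb δ hd0
    (hd2.trans_le (min_le_right _ _)) hE hI
  exact ⟨κ, k0, k1, k2.trans (hd2.le.trans (min_le_left _ _)), k3.trans hd1.le⟩
end proto
end NI

/-- **Theorem 2.** When privacy is required only against Bob, who computes a function
based on a single transmission from Alice, asymptotically secure computability is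
equivalent to perfectly secure computability. -/
theorem asymp_iff_perfect {𝒳 𝒴 𝒵 𝒢 : Type}
    [Fintype 𝒳] [DecidableEq 𝒳] [Fintype 𝒴] [DecidableEq 𝒴]
    [Fintype 𝒵] [DecidableEq 𝒵] [Fintype 𝒢] [DecidableEq 𝒢]
    (pXY : 𝒳 × 𝒴 → ℝ) (hp : IsPMF pXY)
    (f : 𝒳 → 𝒴 → 𝒵) (g : 𝒳 → 𝒴 → 𝒢) :
    AsympSecurelyComputableNI pXY f g ↔ PerfectlySecurelyComputableNI pXY f g := by
  exact ⟨NI.asymp_to_perfect pXY hp f g, NI.perfect_to_asymp pXY hp f g⟩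
end

section
/- (Leakage lower bound from Example 2.) Let M₁ and M₂ be finite-valued random variables such that M₁ is conditionally independent of Yⁿ given Xⁿ and M₂ is conditionally independent of Xⁿ given Yⁿ. If H(Y_Xⁿ | M₂, Xⁿ) ≤ nε and H(Y_Xⁿ | M₁, Yⁿ) ≤ nε for some ε ≥ 0, then H(Y_{X̄}ⁿ | M₁, M₂) ≤ 4nε, and consequently I(M₁, M₂; Y_{X̄}ⁿ) ≥ n·log 2 − 4nε (entropies in nats). -/
open scoped BigOperators

/-- `Y_Xⁿ`: the vector whose `i`-th entry is `Y₀ᵢ` if `Xᵢ = 0` and `Y₁ᵢ` if `Xᵢ = 1`. -/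
def selSame {Ω : Type*} {n : ℕ} (Xv : Ω → Fin n → Bool)
    (Yv : Ω → Fin n → Bool × Bool) : Ω → Fin n → Bool :=
  fun ω i => if Xv ω i then (Yv ω i).2 else (Yv ω i).1

/-- `Y_{X̄}ⁿ`: the vector whose `i`-th entry is `Y_{1−Xᵢ, i}`. -/
def selOpp {Ω : Type*} {n : ℕ} (Xv : Ω → Fin n → Bool)
    (Yv : Ω → Fin n → Bool × Bool) : Ω → Fin n → Bool :=
  fun ω i => if Xv ω i then (Yv ω i).1 else (Yv ω i).2

/-- The inputs `(Xⁿ, Yⁿ) = (Xⁿ, (Y₀ⁿ, Y₁ⁿ))` are `n` i.i.d. copies of three mutually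
independent uniform bits, i.e. the joint distribution is uniform on the `8^n` values. -/
def UnifIID {Ω : Type*} [Fintype Ω] {n : ℕ} (p : Ω → ℝ)
    (Xv : Ω → Fin n → Bool) (Yv : Ω → Fin n → Bool × Bool) : Prop :=
  ∀ (xv : Fin n → Bool) (yv : Fin n → Bool × Bool),
    probOf p (fun ω => Xv ω = xv ∧ Yv ω = yv) = (1 / 8 : ℝ) ^ n

lemma distOf_nonneg {Ω β : Type*} [Fintype Ω] [DecidableEq β] {p : Ω → ℝ} (hp : IsPMF p)
    (A : Ω → β) (b : β) : 0 ≤ distOf p A b :=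
  Finset.sum_nonneg fun ω _ => by split_ifs <;> simp [hp.1 ω]

lemma sum_distOf_mul {Ω β : Type*} [Fintype Ω] [Fintype β] [DecidableEq β] (p : Ω → ℝ)
    (A : Ω → β) (g : β → ℝ) : ∑ b, distOf p A b * g b = ∑ ω, p ω * g (A ω) := by
  simp only [distOf, Finset.sum_mul]
  rw [Finset.sum_comm]
  refine Finset.sum_congr rfl fun ω _ => ?_
  simp [ite_mul]

lemma sum_distOf {Ω β : Type*} [Fintype Ω] [Fintype β] [DecidableEq β] {p : Ω → ℝ}
    (hp : IsPMF p) (A : Ω → β) : ∑ b, distOf p A b = 1 := by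
  have := sum_distOf_mul p A (fun _ => 1)
  simpa [hp.2] using this

lemma entRV_eq {Ω β : Type*} [Fintype Ω] [Fintype β] [DecidableEq β] (p : Ω → ℝ)
    (A : Ω → β) : entRV p A = -∑ ω, p ω * Real.log (distOf p A (A ω)) := by
  rw [entRV, entD, sum_distOf_mul p A (fun b => Real.log (distOf p A b))]

lemma le_distOf_self {Ω β : Type*} [Fintype Ω] [DecidableEq β] {p : Ω → ℝ} (hp : IsPMF p)
    (A : Ω → β) (ω : Ω) : p ω ≤ distOf p A (A ω) := by
  have := Finset.single_le_sum (f := fun ω' => if A ω' = A ω then p ω' else 0)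
    (fun ω' _ => by split_ifs <;> simp [hp.1 ω']) (Finset.mem_univ ω)
  simpa [distOf] using this

lemma entRV_mono {Ω β γ : Type*} [Fintype Ω] [Fintype β] [DecidableEq β]
    [Fintype γ] [DecidableEq γ] {p : Ω → ℝ} (hp : IsPMF p) (A : Ω → β) (B : Ω → γ)
    (h : ∀ ω ω', A ω = A ω' → B ω = B ω') : entRV p B ≤ entRV p A := by
  rw [entRV_eq, entRV_eq, neg_le_neg_iff]
  refine Finset.sum_le_sum fun ω _ => ?_
  rcases (hp.1 ω).eq_or_lt with h0 | h0
  · simp [← h0]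
  refine mul_le_mul_of_nonneg_left (Real.log_le_log ?_ ?_) h0.le
  · exact h0.trans_le (le_distOf_self hp A ω)
  · refine Finset.sum_le_sum fun ω' _ => ?_
    by_cases h1 : A ω' = A ω
    · simp [h1, h _ _ h1]
    · simp only [h1, if_false]
      split_ifs <;> simp [hp.1 ω']

lemma entRV_congr {Ω β γ : Type*} [Fintype Ω] [Fintype β] [DecidableEq β]
    [Fintype γ] [DecidableEq γ] {p : Ω → ℝ} (hp : IsPMF p) (A : Ω → β) (B : Ω → γ)
    (h : ∀ ω ω', A ω = A ω' ↔ B ω = B ω') : entRV p B = entRV p A :=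
  le_antisymm (entRV_mono hp A B fun ω ω' => (h ω ω').1)
    (entRV_mono hp B A fun ω ω' => (h ω ω').2)

lemma distOf_comp {Ω β γ : Type*} [Fintype Ω] [Fintype β] [DecidableEq β]
    [DecidableEq γ] (p : Ω → ℝ) (A : Ω → β) (g : β → γ) :
    distOf p (fun ω => g (A ω)) = fun c => ∑ b, distOf p A b * (if g b = c then 1 else 0) := by
  funext c
  rw [sum_distOf_mul p A (fun b => if g b = c then 1 else 0)]
  simp [distOf]

lemma entRV_comp_eq {Ω β γ : Type*} [Fintype Ω] [Fintype β] [DecidableEq β]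
    [Fintype γ] [DecidableEq γ] (p : Ω → ℝ) (A B : Ω → β) (h : distOf p A = distOf p B)
    (g : β → γ) : entRV p (fun ω => g (A ω)) = entRV p (fun ω => g (B ω)) := by
  rw [entRV, entRV, distOf_comp p A g, distOf_comp p B g, h]

lemma entRV_le_log_card {Ω β : Type*} [Fintype Ω] [Fintype β] [DecidableEq β] {p : Ω → ℝ}
    (hp : IsPMF p) (A : Ω → β) : entRV p A ≤ Real.log (Fintype.card β) := by
  have hne : Nonempty β := by
    by_contra hcon
    rw [not_nonempty_iff] at hcon
    have := sum_distOf hp A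
    simp at this
  have hN : (0 : ℝ) < Fintype.card β := by exact_mod_cast Fintype.card_pos
  have key : ∀ b, -(distOf p A b * Real.log (distOf p A b))
      ≤ distOf p A b * Real.log (Fintype.card β) + (1 / Fintype.card β - distOf p A b) := by
    intro b
    rcases (distOf_nonneg hp A b).eq_or_lt with h0 | h0
    · rw [← h0]; simp
    · have h1 := Real.log_le_sub_one_of_pos (x := 1 / (Fintype.card β * distOf p A b))
        (by positivity)
      rw [one_div, Real.log_inv, Real.log_mul hN.ne' h0.ne'] at h1
      have h2 := mul_le_mul_of_nonneg_left h1 h0.le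
      have h3 : distOf p A b * ((Fintype.card β * distOf p A b)⁻¹ - 1)
          = 1 / Fintype.card β - distOf p A b := by field_simp
      rw [h3] at h2
      linarith
  have := Finset.sum_le_sum fun b (_ : b ∈ Finset.univ) => key b
  rw [Finset.sum_neg_distrib, Finset.sum_add_distrib, ← Finset.sum_mul, Finset.sum_sub_distrib,
    sum_distOf hp A] at this
  simp only [Finset.sum_const, Finset.card_univ, nsmul_eq_mul] at this
  rw [mul_one_div_cancel hN.ne'] at this
  rw [entRV, entD]
  linarith

section CMI
variable {Ω β γ δ : Type*} [Fintype Ω] [Fintype β] [DecidableEq β]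
    [Fintype γ] [DecidableEq γ] [Fintype δ] [DecidableEq δ]

/-- The conditionally independent coupling. -/
noncomputable def qD (p : Ω → ℝ) (A : Ω → β) (B : Ω → γ) (C : Ω → δ) (t : β × γ × δ) : ℝ :=
  distOf p (fun ω => (A ω, C ω)) (t.1, t.2.2) * distOf p (fun ω => (B ω, C ω)) (t.2.1, t.2.2)
    / distOf p C t.2.2

lemma distOf_le {p : Ω → ℝ} (hp : IsPMF p) (A : Ω → β) (B : Ω → γ) (a : β) (b : γ)
    (h : ∀ ω, A ω = a → B ω = b) : distOf p A a ≤ distOf p B b := by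
  refine Finset.sum_le_sum fun ω _ => ?_
  by_cases h1 : A ω = a
  · simp [h1, h _ h1]
  · simp only [h1, if_false]
    split_ifs <;> simp [hp.1 ω]

lemma sum_distOf_fst (p : Ω → ℝ) (A : Ω → β) (C : Ω → δ) (c : δ) :
    ∑ a, distOf p (fun ω => (A ω, C ω)) (a, c) = distOf p C c := by
  simp only [distOf, Prod.mk.injEq]
  rw [Finset.sum_comm]
  refine Finset.sum_congr rfl fun ω _ => ?_
  by_cases h : C ω = c <;> simp [h]

lemma sum_qD {p : Ω → ℝ} (hp : IsPMF p) (A : Ω → β) (B : Ω → γ) (C : Ω → δ) :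
    ∑ t, qD p A B C t = 1 := by
  rw [← sum_distOf hp C]
  simp only [Fintype.sum_prod_type, qD]
  have h1 : ∀ a, ∑ b, ∑ c, distOf p (fun ω => (A ω, C ω)) (a, c)
      * distOf p (fun ω => (B ω, C ω)) (b, c) / distOf p C c
      = ∑ c, distOf p (fun ω => (A ω, C ω)) (a, c) := by
    intro a
    rw [Finset.sum_comm]
    refine Finset.sum_congr rfl fun c _ => ?_
    rw [← Finset.sum_div, ← Finset.mul_sum, sum_distOf_fst]
    by_cases h : distOf p C c = 0
    · have := distOf_le hp (fun ω => (A ω, C ω)) C (a, c) c (by simp)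
      have h2 := distOf_nonneg hp (fun ω => (A ω, C ω)) (a, c)
      rw [h] at this ⊢
      simp [le_antisymm this h2]
    · field_simp
  simp only [h1]
  rw [Finset.sum_comm]
  exact Finset.sum_congr rfl fun c _ => sum_distOf_fst p A C c

lemma cmi_eq {p : Ω → ℝ} (hp : IsPMF p) (A : Ω → β) (B : Ω → γ) (C : Ω → δ) :
    condMutInfo p A B C = ∑ t, qD p A B C t *
      InformationTheory.klFun (distOf p (fun ω => (A ω, B ω, C ω)) t / qD p A B C t) := by
  set r := distOf p (fun ω => (A ω, B ω, C ω)) with hr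
  have key : ∀ t : β × γ × δ, qD p A B C t * InformationTheory.klFun (r t / qD p A B C t)
      = r t * (Real.log (r t) + Real.log (distOf p C t.2.2)
        - Real.log (distOf p (fun ω => (A ω, C ω)) (t.1, t.2.2))
        - Real.log (distOf p (fun ω => (B ω, C ω)) (t.2.1, t.2.2)))
        + (qD p A B C t - r t) := by
    rintro ⟨a, b, c⟩
    rcases (distOf_nonneg hp (fun ω => (A ω, B ω, C ω)) (a, b, c)).eq_or_lt with h0 | h0
    · rw [← hr] at h0
      rw [← h0]
      simp [InformationTheory.klFun]
    · rw [← hr] at h0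
      have hC : 0 < distOf p C c := h0.trans_le (distOf_le hp _ _ _ _ (by simp))
      have hAC : 0 < distOf p (fun ω => (A ω, C ω)) (a, c) :=
        h0.trans_le (distOf_le hp _ _ _ _ (by simp +contextual))
      have hBC : 0 < distOf p (fun ω => (B ω, C ω)) (b, c) :=
        h0.trans_le (distOf_le hp _ _ _ _ (by simp +contextual))
      have hq : 0 < qD p A B C (a, b, c) := by simp only [qD]; positivity
      have hlq : Real.log (qD p A B C (a, b, c)) = Real.log (distOf p (fun ω => (A ω, C ω)) (a, c))
          + Real.log (distOf p (fun ω => (B ω, C ω)) (b, c)) - Real.log (distOf p C c) := by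
        simp only [qD]
        rw [Real.log_div (by positivity) hC.ne', Real.log_mul hAC.ne' hBC.ne']
      rw [InformationTheory.klFun, Real.log_div h0.ne' hq.ne', hlq]
      field_simp
      ring
  simp only [key]
  rw [Finset.sum_add_distrib, Finset.sum_sub_distrib, sum_qD hp, hr, sum_distOf hp,
    sum_distOf_mul p (fun ω => (A ω, B ω, C ω)) (fun t =>
      (Real.log (distOf p (fun ω => (A ω, B ω, C ω)) t) + Real.log (distOf p C t.2.2)
        - Real.log (distOf p (fun ω => (A ω, C ω)) (t.1, t.2.2))
        - Real.log (distOf p (fun ω => (B ω, C ω)) (t.2.1, t.2.2))))]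
  simp only [condMutInfo, entRV_eq, mul_sub, mul_add, Finset.sum_sub_distrib,
    Finset.sum_add_distrib]
  ring

lemma qD_nonneg {p : Ω → ℝ} (hp : IsPMF p) (A : Ω → β) (B : Ω → γ) (C : Ω → δ) (t) :
    0 ≤ qD p A B C t :=
  div_nonneg (mul_nonneg (distOf_nonneg hp _ _) (distOf_nonneg hp _ _)) (distOf_nonneg hp _ _)

lemma cmi_term_nonneg {p : Ω → ℝ} (hp : IsPMF p) (A : Ω → β) (B : Ω → γ) (C : Ω → δ) (t) :
    0 ≤ qD p A B C t *
      InformationTheory.klFun (distOf p (fun ω => (A ω, B ω, C ω)) t / qD p A B C t) :=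
  mul_nonneg (qD_nonneg hp A B C t)
    (InformationTheory.klFun_nonneg (div_nonneg (distOf_nonneg hp _ _) (qD_nonneg hp A B C t)))

lemma cmi_nonneg {p : Ω → ℝ} (hp : IsPMF p) (A : Ω → β) (B : Ω → γ) (C : Ω → δ) :
    0 ≤ condMutInfo p A B C := by
  rw [cmi_eq hp]
  exact Finset.sum_nonneg fun t _ => cmi_term_nonneg hp A B C t

lemma dist_of_cmi_zero {p : Ω → ℝ} (hp : IsPMF p) (A : Ω → β) (B : Ω → γ) (C : Ω → δ)
    (h : condMutInfo p A B C = 0) (t) :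
    distOf p (fun ω => (A ω, B ω, C ω)) t = qD p A B C t := by
  rw [cmi_eq hp, Finset.sum_eq_zero_iff_of_nonneg fun t _ => cmi_term_nonneg hp A B C t] at h
  have h1 := h t (Finset.mem_univ _)
  rcases mul_eq_zero.1 h1 with h2 | h2
  · rw [h2]
    have h3 := h2
    obtain ⟨a, b, c⟩ := t
    refine le_antisymm ?_ (distOf_nonneg hp _ _)
    simp only [qD, div_eq_zero_iff, mul_eq_zero] at h3
    rcases h3 with (h3 | h3) | h3 <;> rw [← h3] <;>
      exact distOf_le hp _ _ _ _ (by simp +contextual)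
  · rw [InformationTheory.klFun_eq_zero_iff
      (div_nonneg (distOf_nonneg hp _ _) (qD_nonneg hp A B C t))] at h2
    have : qD p A B C t ≠ 0 := by
      intro h0; rw [h0] at h2; simp at h2
    field_simp at h2
    exact h2

lemma subadd {p : Ω → ℝ} (hp : IsPMF p) (A : Ω → β) (B : Ω → γ) :
    entRV p (fun ω => (A ω, B ω)) ≤ entRV p A + entRV p B := by
  have h := cmi_nonneg hp A B (fun _ => ())
  have h1 : entRV p (fun ω => (A ω, ())) = entRV p A := entRV_congr hp _ _ (by simp)
  have h2 : entRV p (fun ω => (B ω, ())) = entRV p B := entRV_congr hp _ _ (by simp)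
  have h3 : entRV p (fun ω => (A ω, B ω, ())) = entRV p (fun ω => (A ω, B ω)) :=
    entRV_congr hp _ _ (by simp)
  have h4 : entRV p (fun _ : Ω => ()) = 0 := by
    simp [entRV_eq, distOf, hp.2]
  rw [condMutInfo, h1, h2, h3, h4] at h
  linarith

/-- If `M ⊥ B | C` and `(B, C)` is uniform, the law of `(M, B, C)` is invariant in `B`. -/
lemma invariant {p : Ω → ℝ} (hp : IsPMF p) (M : Ω → β) (B : Ω → γ) (C : Ω → δ)
    (h : condMutInfo p M B C = 0) (u : ℝ)
    (hu : ∀ b c, distOf p (fun ω => (B ω, C ω)) (b, c) = u) (τ : γ → γ)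
    (hτ : ∀ b, τ (τ b) = b) :
    distOf p (fun ω => (M ω, B ω, C ω)) = distOf p (fun ω => (M ω, τ (B ω), C ω)) := by
  funext ⟨m, b, c⟩
  have h1 : distOf p (fun ω => (M ω, τ (B ω), C ω)) (m, b, c)
      = distOf p (fun ω => (M ω, B ω, C ω)) (m, τ b, c) := by
    refine Finset.sum_congr rfl fun ω _ => ?_
    have : τ (B ω) = b ↔ B ω = τ b :=
      ⟨fun h => by rw [← h, hτ], fun h => by rw [h, hτ]⟩
    simp [this]
  rw [h1, dist_of_cmi_zero hp M B C h, dist_of_cmi_zero hp M B C h]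
  simp only [qD, hu]

/-- Common core: `H(C | M) ≤ H(C | M, B)` if `M ⊥ B | C`, and `B ⊥ C`. -/
lemma core {β' : Type*} [Fintype β'] [DecidableEq β']
    {p : Ω → ℝ} (hp : IsPMF p) (M : Ω → β) (B : Ω → γ) (C : Ω → δ) (Z Z' : Ω → β')
    (h : condMutInfo p M B C = 0)
    (hind : entRV p B + entRV p C ≤ entRV p (fun ω => (B ω, C ω)))
    (hdet : ∀ ω ω', B ω = B ω' → Z ω = Z ω' → Z' ω = Z' ω' → C ω = C ω')
    (e : ℝ)
    (hZ : condEnt p Z (fun ω => (M ω, B ω)) ≤ e)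
    (hZ' : condEnt p Z' (fun ω => (M ω, B ω)) ≤ e) :
    condEnt p C M ≤ 2 * e := by
  have h1 := cmi_nonneg hp Z Z' (fun ω => (M ω, B ω))
  have h2 : entRV p (fun ω => (M ω, B ω, C ω)) ≤ entRV p (fun ω => (Z ω, Z' ω, M ω, B ω)) :=
    entRV_mono hp _ _ (by
      intro ω ω' hh
      simp only [Prod.mk.injEq] at hh ⊢
      exact ⟨hh.2.2.1, hh.2.2.2, hdet _ _ hh.2.2.2 hh.1 hh.2.1⟩)
  have h3 := subadd hp M B
  have h4 : entRV p (fun ω => (C ω, M ω)) = entRV p (fun ω => (M ω, C ω)) :=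
    entRV_congr hp _ _ (by simp [and_comm])
  simp only [condMutInfo, condEnt] at *
  linarith

end CMI

theorem leakage_lower_bound {Ω 𝓜₁ 𝓜₂ : Type}
    [Fintype Ω] [Fintype 𝓜₁] [DecidableEq 𝓜₁] [Fintype 𝓜₂] [DecidableEq 𝓜₂]
    (n : ℕ) (p : Ω → ℝ) (hp : IsPMF p)
    (Xv : Ω → Fin n → Bool) (Yv : Ω → Fin n → Bool × Bool)
    (hiid : UnifIID p Xv Yv)
    (M₁ : Ω → 𝓜₁) (M₂ : Ω → 𝓜₂)
    (hci₁ : condMutInfo p M₁ Yv Xv = 0)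
    (hci₂ : condMutInfo p M₂ Xv Yv = 0)
    (ε : ℝ) (hε : 0 ≤ ε)
    (hbob : condEnt p (selSame Xv Yv) (fun ω => (M₂ ω, Xv ω)) ≤ n * ε)
    (halice : condEnt p (selSame Xv Yv) (fun ω => (M₁ ω, Yv ω)) ≤ n * ε) :
    condEnt p (selOpp Xv Yv) (fun ω => (M₁ ω, M₂ ω)) ≤ 4 * n * ε ∧
    mutInfo p (fun ω => (M₁ ω, M₂ ω)) (selOpp Xv Yv) ≥ n * Real.log 2 - 4 * n * ε := by
  have huXY : ∀ x y, distOf p (fun ω => (Xv ω, Yv ω)) (x, y) = (1 / 8 : ℝ) ^ n := by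
    intro x y
    rw [← hiid x y]
    simp only [distOf, probOf, Prod.mk.injEq]
    exact Finset.sum_congr rfl fun ω _ => by congr
  have huYX : ∀ y x, distOf p (fun ω => (Yv ω, Xv ω)) (y, x) = (1 / 8 : ℝ) ^ n := by
    intro y x
    rw [← huXY x y]
    simp only [distOf, Prod.mk.injEq]
    exact Finset.sum_congr rfl fun ω _ => by simp only [and_comm]
  have hl4 : Real.log 4 = 2 * Real.log 2 := by
    rw [show (4 : ℝ) = 2 ^ 2 by norm_num, Real.log_pow]; norm_num
  have hl8 : Real.log 8 = 3 * Real.log 2 := by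
    rw [show (8 : ℝ) = 2 ^ 3 by norm_num, Real.log_pow]; norm_num
  have hbits : ∀ A : Ω → Fin n → Bool, entRV p A ≤ n * Real.log 2 := by
    intro A
    have := entRV_le_log_card hp A
    simpa [Real.log_pow] using this
  have hY : entRV p Yv ≤ n * (2 * Real.log 2) := by
    have := entRV_le_log_card hp Yv
    rw [← hl4]
    norm_num [Real.log_pow] at this
    exact this
  have hXY : entRV p (fun ω => (Xv ω, Yv ω)) = n * (3 * Real.log 2) := by
    rw [entRV_eq]
    simp only [huXY]
    rw [← Finset.sum_mul, hp.2, Real.log_pow, one_div, Real.log_inv, hl8]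
    ring
  have hYX : entRV p (fun ω => (Yv ω, Xv ω)) = entRV p (fun ω => (Xv ω, Yv ω)) :=
    entRV_congr hp _ _ (by simp [and_comm])
  have hX := hbits Xv
  -- Bob side
  have hb' : condEnt p (selOpp Xv Yv) (fun ω => (M₂ ω, Xv ω)) ≤ n * ε := by
    have hinv := invariant hp M₂ Xv Yv hci₂ _ huXY (fun x i => !(x i)) (by simp)
    have h1 := entRV_comp_eq p _ _ hinv
      (fun t => ((fun i => if t.2.1 i then (t.2.2 i).2 else (t.2.2 i).1 : Fin n → Bool), t.1, t.2.1))
    have h2 : entRV p (fun ω => (selOpp Xv Yv ω, M₂ ω, Xv ω))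
        = entRV p (fun ω => (selSame Xv Yv ω, M₂ ω, Xv ω)) := by
      refine Eq.trans ?_ h1.symm
      refine entRV_congr hp _ _ ?_
      intro ω ω'
      simp only [selOpp, Prod.mk.injEq, funext_iff]
      simp
      intro _ hx
      refine forall_congr' fun i => ?_
      cases h : Xv ω' i <;> simp [hx i, h]
    simp only [condEnt] at hbob ⊢
    rw [h2]; exact hbob
  have ha' : condEnt p (fun ω i => if Xv ω i then !(Yv ω i).2 else (Yv ω i).1)
      (fun ω => (M₁ ω, Yv ω)) ≤ n * ε := by
    have hinv := invariant hp M₁ Yv Xv hci₁ _ huYX (fun y i => ((y i).1, !(y i).2)) (by simp)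
    have h1 := entRV_comp_eq p _ _ hinv
      (fun t => ((fun i => if t.2.2 i then (t.2.1 i).2 else (t.2.1 i).1 : Fin n → Bool), t.1, t.2.1))
    have h2 : entRV p (fun ω => ((fun i => if Xv ω i then !(Yv ω i).2 else (Yv ω i).1 :
          Fin n → Bool), M₁ ω, Yv ω))
        = entRV p (fun ω => (selSame Xv Yv ω, M₁ ω, Yv ω)) := by
      refine Eq.trans ?_ h1.symm
      refine entRV_congr hp _ _ ?_
      intro ω ω'
      simp only [Prod.mk.injEq, funext_iff, Prod.ext_iff]
      simp
    simp only [condEnt] at halice ⊢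
    rw [h2]; exact halice
  have hYM : condEnt p Yv M₂ ≤ 2 * (n * ε) := by
    refine core hp M₂ Xv Yv (selSame Xv Yv) (selOpp Xv Yv) hci₂ (by linarith) ?_ _ hbob hb'
    intro ω ω' h1 h2 h3
    funext i
    have h2 := congrFun h2 i
    have h3 := congrFun h3 i
    simp only [selSame, selOpp, h1] at h2 h3
    cases h : Xv ω' i <;> simp [h] at h2 h3 <;> ext <;> simp [h2, h3]
  have hXM : condEnt p Xv M₁ ≤ 2 * (n * ε) := by
    refine core hp M₁ Yv Xv (selSame Xv Yv) _ hci₁ (by linarith) ?_ _ halice ha'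
    intro ω ω' h1 h2 h3
    funext i
    have h2 := congrFun h2 i
    have h3 := congrFun h3 i
    simp only [selSame, h1] at h2 h3
    cases h : Xv ω' i <;> cases h' : Xv ω i <;> simp [h, h'] at h2 h3 ⊢ <;> simp_all
  have main : condEnt p (selOpp Xv Yv) (fun ω => (M₁ ω, M₂ ω)) ≤ 4 * n * ε := by
    -- `H(W, M₁, M₂) ≤ H(X, Y, M₁, M₂)`
    have h1 : entRV p (fun ω => (selOpp Xv Yv ω, M₁ ω, M₂ ω))
        ≤ entRV p (fun ω => (Xv ω, Yv ω, M₁ ω, M₂ ω)) :=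
      entRV_mono hp _ _ (by
        intro ω ω' hh
        simp only [Prod.mk.injEq] at hh ⊢
        refine ⟨?_, hh.2.2⟩
        funext i
        simp [selOpp, hh.1, hh.2.1])
    have h2 := cmi_nonneg hp Xv Yv (fun ω => (M₁ ω, M₂ ω))
    have h3 := cmi_nonneg hp Xv M₂ M₁
    have h4 := cmi_nonneg hp Yv M₁ M₂
    have e3 : entRV p (fun ω => (Xv ω, M₂ ω, M₁ ω)) = entRV p (fun ω => (Xv ω, M₁ ω, M₂ ω)) :=
      entRV_congr hp _ _ (by simp [and_comm])
    have e4 : entRV p (fun ω => (M₂ ω, M₁ ω)) = entRV p (fun ω => (M₁ ω, M₂ ω)) :=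
      entRV_congr hp _ _ (by simp [and_comm])
    simp only [condMutInfo, condEnt] at *
    linarith
  refine ⟨main, ?_⟩
  have hW : n * Real.log 2 ≤ entRV p (selOpp Xv Yv) := by
    have h1 := subadd hp (selSame Xv Yv) (fun ω => (selOpp Xv Yv ω, Xv ω))
    have h2 := subadd hp (selOpp Xv Yv) Xv
    have h3 := hbits (selSame Xv Yv)
    have h4 : entRV p (fun ω => (Xv ω, Yv ω))
        ≤ entRV p (fun ω => (selSame Xv Yv ω, selOpp Xv Yv ω, Xv ω)) :=
      entRV_mono hp _ _ (by
        intro ω ω' hh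
        simp only [Prod.mk.injEq] at hh ⊢
        obtain ⟨h2, h3, h1⟩ := hh
        refine ⟨h1, ?_⟩
        funext i
        have h2 := congrFun h2 i
        have h3 := congrFun h3 i
        simp only [selSame, selOpp, h1] at h2 h3
        cases h : Xv ω' i <;> simp [h] at h2 h3 <;> ext <;> simp [h2, h3])
    linarith
  have e : entRV p (fun ω => ((M₁ ω, M₂ ω), selOpp Xv Yv ω))
      = entRV p (fun ω => (selOpp Xv Yv ω, M₁ ω, M₂ ω)) :=
    entRV_congr hp _ _ (by simp [and_comm, and_assoc])
  simp only [mutInfo, condEnt] at *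
  linarith
end
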